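/- arXiv:2602.19434 — 2 statements merged into one kernel-verified Lean document; each statement's English description precedes it below -/
import Mathlib

section
/- There exists a universal constant C < ∞ (independent of n and d) such that for all integers n ≥ 1 and d ≥ 3: every map F : TC([2^n]^d) → L_1 with bi-Lipschitz distortion at most D satisfies D ≥ C^{−1}·(n−23)·d. -/
open MeasureTheory Finset

noncomputable section

/-- Points of the grid `[2^n]^d` (coordinates taken 0-based). -/
abbrev GridPt (n d : ℕ) := Fin d → Fin (2^n)

/-- Normalized counting "volume" of a subset of the grid: `Vol(A) = 2^{-nd}|A|`. -/
def Vol (n d : ℕ) (A : Finset (GridPt n d)) : ℝ := (A.card : ℝ) / 2^(n*d)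

/-- The ℓ1 metric on the grid. -/
def gdist {n d : ℕ} (u v : GridPt n d) : ℝ := ∑ i, |((u i : ℕ) : ℝ) - ((v i : ℕ) : ℝ)|

/-- The transportation cost norm of a signed measure `μ` on the grid (given by its point
masses), via Kantorovich duality: the supremum of `|∫ f dμ|` over `1`-Lipschitz `f`. -/
def tcNorm (n d : ℕ) (μ : GridPt n d → ℝ) : ℝ :=
  sSup {r : ℝ | ∃ f : GridPt n d → ℝ,
    (∀ u v, |f u - f v| ≤ gdist u v) ∧ r = |∑ x, f x * μ x|}

/-- The Lebesgue space `L_1(0,1)`. -/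
abbrev L1Space : Type := Lp ℝ 1 (volume.restrict (Set.Ioo (0:ℝ) 1))

/-!
Smoothing an embedding at unit scale and averaging its derivatives turns it into a linear operator
`T` from the transportation cost space to `L₁`, with no loss in the distortion. Writing
`T (δ_x - δ_y) = f x - f y` and integrating over superlevel sets, any inequality
`∑ i, a i * ‖T (μ i)‖ ≤ ∑ j, b j * ‖T (δ_{u j} - δ_{v j})‖` only has to be verified on subsets `A`
of the grid.

The `μ i` are differences of the empirical measures of two independent samples of `2 ^ (r d)`
uniform points, for `r = 3, …, n - 4`, and the `δ_{u j} - δ_{v j}` are the edges of the grid. The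
typical distance between sample points is about `d 2 ^ (n - r)`, so suitably weighted, each of the
`n - 6` scales contributes a transportation cost of order `2 ^ n d`. Against `𝟙_A` an empirical
difference is bounded in mean by its first and second moments; if `|A| = (2 ^ n β) ^ d`, these
bounds decay geometrically in `r` away from the scale `2 ^ r β ≈ 1`, so that the *sum* over the
scales is only as large as one term, which the isoperimetric inequality compares with the number of
edges leaving `A`.
-/

section Variation

variable {ι : Type*} [LinearOrder ι] [LocallyFiniteOrder ι] [SuccOrder ι]

lemma dist_le_sum_Ico_dist_succ {E : Type*} [PseudoMetricSpace E] (g : ι → E) {a b : ι}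
    (hab : a ≤ b) : dist (g a) (g b) ≤ ∑ t ∈ Ico a b, dist (g t) (g (Order.succ t)) := by
  induction hab using Succ.rec with
  | rfl => simp
  | succ b hab ih =>
    by_cases hb : IsMax b
    · rwa [hb.succ_eq]
    · rw [← insert_Ico_right_eq_Ico_succ_of_not_isMax hab hb, sum_insert right_notMem_Ico, add_comm]
      exact (dist_triangle _ _ _).trans (add_le_add_left ih _)

variable [Fintype ι]

lemma sub_le_sum_abs_succ_sub (g : ι → ℝ) (a b : ι) :
    g a - g b ≤ ∑ t, |g (Order.succ t) - g t| := by
  have dist_le {a b : ι} (hab : a ≤ b) : dist (g a) (g b) ≤ ∑ t, |g (Order.succ t) - g t| :=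
    calc dist (g a) (g b) ≤ ∑ t ∈ Ico a b, dist (g t) (g (Order.succ t)) :=
          dist_le_sum_Ico_dist_succ g hab
      _ ≤ ∑ t, dist (g t) (g (Order.succ t)) :=
          sum_le_univ_sum_of_nonneg fun _ ↦ dist_nonneg
      _ = _ := by simp only [Real.dist_eq, abs_sub_comm]
  refine (le_abs_self _).trans ?_
  rw [← Real.dist_eq]
  rcases le_total a b with hab | hba
  · exact dist_le hab
  · exact dist_comm (g a) (g b) ▸ dist_le hba

lemma le_sum_abs_succ_sub_add_mean (g : ι → ℝ) (a : ι) :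
    g a ≤ ∑ t, |g (Order.succ t) - g t| + (∑ t, g t) / Fintype.card ι := by
  have hι : (0 : ℝ) < Fintype.card ι := by exact_mod_cast Fintype.card_pos_iff.2 ⟨a⟩
  have hsum := sum_le_sum fun b (_ : b ∈ univ) ↦ sub_le_sum_abs_succ_sub g a b
  rw [sum_sub_distrib, sum_const, sum_const, card_univ, nsmul_eq_mul, nsmul_eq_mul] at hsum
  rw [← sub_le_iff_le_add, sub_le_comm, le_div_iff₀ hι]
  linarith

/-- The one-dimensional case, where the maximum of `g` bounds `∑ g log g`. -/
lemma entropy_le_exp_mul_variation [Nonempty ι] {g : ι → ℝ} (hg : 0 ≤ g) (s : ℝ) :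
    (1 + s) * ∑ t, g t + ∑ t, g t * Real.log (g t) - (∑ t, g t) * Real.log (∑ t, g t) ≤
      Real.exp s * (∑ t, |g (Order.succ t) - g t| + (∑ t, g t) / Fintype.card ι) := by
  obtain ⟨a, ha⟩ := Finite.exists_max g
  have hmax := le_sum_abs_succ_sub_add_mean g a
  set T := ∑ t, g t
  have hlog : ∑ t, g t * Real.log (g t) ≤ T * Real.log (g a) := by
    rw [sum_mul]
    refine sum_le_sum fun t _ ↦ ?_
    rcases (hg t).eq_or_lt with ht | ht
    · simp [← ht]
    · exact mul_le_mul_of_nonneg_left (Real.log_le_log ht (ha t)) ht.le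
  refine le_trans ?_ (mul_le_mul_of_nonneg_left hmax (Real.exp_pos s).le)
  have hT0 : 0 ≤ T := sum_nonneg fun t _ ↦ hg t
  rcases hT0.eq_or_lt with hT | hT
  · rw [← hT] at hlog ⊢
    have := mul_nonneg (Real.exp_pos s).le (hg a)
    linarith
  have hga : 0 < g a := (hg a).lt_of_ne fun h0 ↦
    hT.not_ge (sum_nonpos fun t _ ↦ (ha t).trans h0.ge)
  have hexp := mul_le_mul_of_nonneg_left (Real.add_one_le_exp (s + Real.log (g a / T))) hT.le
  rw [Real.exp_add, Real.exp_log (div_pos hga hT), mul_left_comm, mul_div_cancel₀ _ hT.ne',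
    Real.log_div hga.ne' hT.ne'] at hexp
  linarith

end Variation

/-- The `ℓ₁` norm of the gradient of `f` along the edges of the grid graph on `Fin d → Fin m`.
Since `Order.succ` fixes the last element of `Fin m`, the spurious edges leaving the grid contribute
zero. -/
def edgeVariation {d m : ℕ} [NeZero m] (f : (Fin d → Fin m) → ℝ) : ℝ :=
  ∑ x, ∑ i, |f (Function.update x i (Order.succ (x i))) - f x|

section Isoperimetry

variable {d m : ℕ}

lemma sum_pi_eq_sum_cons {α M : Type*} [Fintype α] [AddCommMonoid M] (f : (Fin (d + 1) → α) → M) :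
    ∑ x, f x = ∑ t, ∑ y : Fin d → α, f (Fin.cons t y) := by
  rw [← (Fin.consEquiv fun _ ↦ α).sum_comp, Fintype.sum_prod_type]
  rfl

variable [NeZero m]

lemma edgeVariation_succ (f : (Fin (d + 1) → Fin m) → ℝ) :
    edgeVariation f =
      ∑ t, ∑ y : Fin d → Fin m, |f (Fin.cons (Order.succ t) y) - f (Fin.cons t y)| +
        ∑ t, edgeVariation fun y : Fin d → Fin m ↦ f (Fin.cons t y) := by
  simp only [edgeVariation, sum_pi_eq_sum_cons, ← sum_add_distrib, Fin.sum_univ_succ, Fin.cons_zero,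
    Fin.cons_succ, Fin.update_cons_zero, Fin.cons_update]

lemma sum_variation_add_sum_edgeVariation_le (f : (Fin (d + 1) → Fin m) → ℝ) :
    ∑ t, |∑ y : Fin d → Fin m, f (Fin.cons (Order.succ t) y) -
        ∑ y : Fin d → Fin m, f (Fin.cons t y)| +
      ∑ t, (edgeVariation fun y : Fin d → Fin m ↦ f (Fin.cons t y)) ≤ edgeVariation f := by
  rw [edgeVariation_succ]
  gcongr with t
  rw [← sum_sub_distrib]
  exact abs_sum_le_sum_abs _ _

/-- An `L₁` logarithmic Sobolev inequality: its entropy term makes it tensorize. -/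
lemma entropy_le_exp_mul_edgeVariation {f : (Fin d → Fin m) → ℝ} (hf : 0 ≤ f) (s : ℝ) :
    d * (1 + s) * ∑ x, f x + ∑ x, f x * Real.log (f x) - (∑ x, f x) * Real.log (∑ x, f x) ≤
      Real.exp s * (edgeVariation f + d * (∑ x, f x) / m) := by
  induction d with
  | zero => simp [edgeVariation]
  | succ d ih =>
    set S : Fin m → ℝ := fun t ↦ ∑ y : Fin d → Fin m, f (Fin.cons t y) with hS
    have hslices := sum_le_sum fun t (_ : t ∈ univ) ↦
      ih (f := fun y ↦ f (Fin.cons t y)) fun y ↦ hf _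
    have hmarginal := entropy_le_exp_mul_variation (g := S) (fun t ↦ sum_nonneg fun y _ ↦ hf _) s
    have hvar := mul_le_mul_of_nonneg_left (sum_variation_add_sum_edgeVariation_le f)
      (Real.exp_pos s).le
    simp only [sum_add_distrib, sum_sub_distrib, ← mul_sum, ← sum_div, ← hS,
      Fintype.card_fin] at hslices hmarginal hvar
    rw [sum_pi_eq_sum_cons f, sum_pi_eq_sum_cons fun x ↦ f x * Real.log (f x)]
    push_cast
    rw [add_one_mul (d : ℝ) (1 + s), add_one_mul (d : ℝ), add_div]
    linarith

/-- The choice `s = log v` is optimal. -/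
lemma isoperimetric_edgeVariation (A : Set (Fin d → Fin m)) {v : ℝ} (hv : 0 < v)
    (hA : ∑ x, A.indicator 1 x = v ^ d) :
    d * v ^ (d - 1) * (1 - v / m) ≤ edgeVariation (A.indicator 1) := by
  rcases d with - | d
  · simp [edgeVariation]
  have hentropy : ∑ x, A.indicator 1 x * Real.log (A.indicator 1 x) = 0 :=
    sum_eq_zero fun x _ ↦ by by_cases hx : x ∈ A <;> simp [hx]
  have h := entropy_le_exp_mul_edgeVariation (f := A.indicator 1)
    (Set.indicator_nonneg fun _ _ ↦ zero_le_one) (Real.log v)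
  rw [hA, hentropy, Real.log_pow, Real.exp_log hv] at h
  have hcalc : v * ((d + 1 : ℕ) * v ^ (d + 1 - 1) * (1 - v / m)) ≤
      v * edgeVariation (A.indicator 1) := by
    rw [Nat.add_sub_cancel]
    linear_combination h
  exact le_of_mul_le_mul_left hcalc hv

end Isoperimetry

section Superlevel

variable {X : Type*} (f : X → ℝ) {a b : ℝ} {x y : X}

lemma indicator_superlevel_eq (t : ℝ) (x : X) :
    {z | t < f z}.indicator (1 : X → ℝ) x = (Set.Iio (f x)).indicator 1 t := rfl

lemma integrableOn_indicator_superlevel (a b : ℝ) (x : X) :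
    IntegrableOn (fun t ↦ {z | t < f z}.indicator (1 : X → ℝ) x) (Set.Ico a b) := by
  simp only [indicator_superlevel_eq]
  exact (integrableOn_const measure_Ico_lt_top.ne).indicator measurableSet_Iio

lemma setIntegral_indicator_superlevel (ha : a ≤ f x) (hb : f x ≤ b) :
    ∫ t in Set.Ico a b, {z | t < f z}.indicator (1 : X → ℝ) x = f x - a := by
  simp only [indicator_superlevel_eq]
  rw [integral_indicator_one measurableSet_Iio, measureReal_restrict_apply measurableSet_Iio,
    Set.inter_comm, Set.Ico_inter_Iio, min_eq_right hb, Real.volume_real_Ico_of_le ha]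

lemma setIntegral_abs_sub_indicator_superlevel (hx : f x ∈ Set.Icc a b) (hy : f y ∈ Set.Icc a b) :
    ∫ t in Set.Ico a b,
      |{z | t < f z}.indicator (1 : X → ℝ) x - {z | t < f z}.indicator (1 : X → ℝ) y| =
        |f x - f y| := by
  wlog hyx : f y ≤ f x generalizing x y
  · simpa only [abs_sub_comm] using this hy hx (le_of_not_ge hyx)
  have hmono (t : ℝ) :
      {z | t < f z}.indicator (1 : X → ℝ) y ≤ {z | t < f z}.indicator (1 : X → ℝ) x := by
    simp only [indicator_superlevel_eq]
    exact Set.indicator_le_indicator_of_subset (Set.Iio_subset_Iio hyx) (fun _ ↦ zero_le_one) t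
  simp only [abs_of_nonneg (sub_nonneg.2 (hmono _)), abs_of_nonneg (sub_nonneg.2 hyx)]
  rw [integral_sub (integrableOn_indicator_superlevel f a b x)
    (integrableOn_indicator_superlevel f a b y), setIntegral_indicator_superlevel f hx.1 hx.2,
    setIntegral_indicator_superlevel f hy.1 hy.2, sub_sub_sub_cancel_right]

end Superlevel

section Cut

variable {X ι κ S : Type*} [Fintype X] [Fintype ι] [Fintype κ] [MeasurableSpace S] {ν : Measure S}
  {a : ι → ℝ} {μ : ι → X → ℝ} {b : κ → ℝ} {u v : κ → X}

lemma sum_mul_integral_abs_le {g : S → X → ℝ} (hg : ∀ x, Integrable (fun s ↦ g s x) ν)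
    (hle : ∀ s, ∑ i, a i * |∑ x, g s x * μ i x| ≤ ∑ j, b j * |g s (u j) - g s (v j)|) :
    ∑ i, a i * ∫ s, |∑ x, g s x * μ i x| ∂ν ≤ ∑ j, b j * ∫ s, |g s (u j) - g s (v j)| ∂ν := by
  have hleft (i : ι) : Integrable (fun s ↦ a i * |∑ x, g s x * μ i x|) ν :=
    (integrable_finsetSum _ fun x _ ↦ (hg x).mul_const _).abs.const_mul _
  have hright (j : κ) : Integrable (fun s ↦ b j * |g s (u j) - g s (v j)|) ν :=
    ((hg _).sub (hg _)).abs.const_mul _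
  simp only [← integral_const_mul]
  rw [← integral_finsetSum _ fun i _ ↦ hleft i, ← integral_finsetSum _ fun j _ ↦ hright j]
  exact integral_mono (integrable_finsetSum _ fun i _ ↦ hleft i)
    (integrable_finsetSum _ fun j _ ↦ hright j) hle

variable (ha : ∀ i, 0 ≤ a i) (hμ : ∀ i, ∑ x, μ i x = 0)
  (hcut : ∀ A : Set X, ∑ i, a i * |∑ x, A.indicator 1 x * μ i x| ≤
    ∑ j, b j * |A.indicator 1 (u j) - A.indicator 1 (v j)|)

include ha hμ hcut

/-- Coarea: both sides are integrated over the superlevel sets of `f`. -/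
lemma sum_mul_abs_le_of_cut (f : X → ℝ) :
    ∑ i, a i * |∑ x, f x * μ i x| ≤ ∑ j, b j * |f (u j) - f (v j)| := by
  cases isEmpty_or_nonempty X
  · have : IsEmpty κ := Function.isEmpty u
    simp
  obtain ⟨p, hp⟩ := Finite.exists_min f
  obtain ⟨q, hq⟩ := Finite.exists_max f
  set g : ℝ → X → ℝ := fun t ↦ {z | t < f z}.indicator 1 with hg
  have hpairing (i : ι) :
      ∑ x, f x * μ i x = ∫ t in Set.Ico (f p) (f q), ∑ x, g t x * μ i x := by
    rw [integral_finsetSum _ fun x _ ↦ (integrableOn_indicator_superlevel f _ _ x).mul_const _]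
    simp only [integral_mul_const, setIntegral_indicator_superlevel f (hp _) (hq _), sub_mul,
      sum_sub_distrib, ← mul_sum, hμ, mul_zero, sub_zero]
  calc ∑ i, a i * |∑ x, f x * μ i x|
      ≤ ∑ i, a i * ∫ t in Set.Ico (f p) (f q), |∑ x, g t x * μ i x| := by
        gcongr with i
        · exact ha i
        · exact hpairing i ▸ abs_integral_le_integral_abs
    _ ≤ ∑ j, b j * ∫ t in Set.Ico (f p) (f q), |g t (u j) - g t (v j)| :=
        sum_mul_integral_abs_le (integrableOn_indicator_superlevel f _ _) fun t ↦ hcut _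
    _ = ∑ j, b j * |f (u j) - f (v j)| := by
        simp only [hg, setIntegral_abs_sub_indicator_superlevel f ⟨hp _, hq _⟩ ⟨hp _, hq _⟩]

lemma sum_mul_norm_le_of_cut (f : X → Lp ℝ 1 ν) :
    ∑ i, a i * ‖∑ x, μ i x • f x‖ ≤ ∑ j, b j * ‖f (u j) - f (v j)‖ := by
  have hleft (i : ι) : ‖∑ x, μ i x • f x‖ = ∫ s, |∑ x, f x s * μ i x| ∂ν := by
    rw [L1.norm_eq_integral_norm]
    refine integral_congr_ae ?_
    have hsmul : ∀ᵐ s ∂ν, ∀ x, (μ i x • f x) s = μ i x • f x s :=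
      ae_all_iff.2 fun x ↦ Lp.coeFn_smul (μ i x) (f x)
    filter_upwards [Lp.coeFn_finsetSum univ fun x ↦ μ i x • f x, hsmul] with s hsum hsmul
    simp only [hsum, Finset.sum_apply, hsmul, Real.norm_eq_abs, smul_eq_mul, mul_comm]
  have hright (j : κ) : ‖f (u j) - f (v j)‖ = ∫ s, |f (u j) s - f (v j) s| ∂ν := by
    rw [L1.norm_eq_integral_norm]
    refine integral_congr_ae ?_
    filter_upwards [Lp.coeFn_sub (f (u j)) (f (v j))] with s hs
    rw [hs, Pi.sub_apply, Real.norm_eq_abs]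
  simp only [hleft, hright]
  exact sum_mul_integral_abs_le (fun x ↦ L1.integrable_coeFn (f x)) fun s ↦
    sum_mul_abs_le_of_cut ha hμ hcut fun x ↦ f x s

end Cut

section Sampling

open scoped BigOperators

variable {ι Ω : Type*} [Fintype ι] [DecidableEq ι] [Fintype Ω]

lemma expect_eval_mul_eval_eq_zero {i j : ι} (hij : i ≠ j) {h : Ω → ℝ} (hmean : 𝔼 z, h z = 0) :
    𝔼 ω : ι → Ω, h (ω i) * h (ω j) = 0 :=
  calc 𝔼 ω : ι → Ω, h (ω i) * h (ω j)
      = 𝔼 p : Ω × ({k // k ≠ i} → Ω), h p.1 * h (p.2 ⟨j, hij.symm⟩) :=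
        Fintype.expect_equiv (Equiv.funSplitAt i Ω) _ _ fun _ ↦ rfl
    _ = 0 := by
        rw [← univ_product_univ, expect_product]
        simp only [← mul_expect, ← expect_mul, hmean, zero_mul]

variable [Nonempty Ω]

lemma expect_comp_eval (j : ι) (h : Ω → ℝ) : 𝔼 ω : ι → Ω, h (ω j) = 𝔼 z, h z :=
  calc 𝔼 ω : ι → Ω, h (ω j) = 𝔼 p : Ω × ({i // i ≠ j} → Ω), h p.1 :=
        Fintype.expect_equiv (Equiv.funSplitAt j Ω) _ _ fun _ ↦ rfl
    _ = 𝔼 z, h z := by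
        rw [← univ_product_univ, expect_product]
        simp only [Fintype.expect_const]

lemma expect_sum_sq {h : Ω → ℝ} (hmean : 𝔼 z, h z = 0) :
    𝔼 ω : ι → Ω, (∑ j, h (ω j)) ^ 2 = Fintype.card ι * 𝔼 z, h z ^ 2 := by
  simp only [sq, sum_mul_sum, expect_sum_comm]
  have hdiag (i : ι) : ∑ j, 𝔼 ω : ι → Ω, h (ω i) * h (ω j) = 𝔼 z, h z * h z := by
    rw [sum_eq_single i (fun j _ hji ↦ expect_eval_mul_eval_eq_zero hji.symm hmean) (by simp)]
    exact expect_comp_eval i fun z ↦ h z * h z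
  simp only [hdiag, sum_const, card_univ, nsmul_eq_mul]

lemma expect_abs_sum_le (h : Ω → ℝ) :
    𝔼 ω : ι → Ω, |∑ j, h (ω j)| ≤ Fintype.card ι * 𝔼 z, |h z| :=
  calc 𝔼 ω : ι → Ω, |∑ j, h (ω j)| ≤ 𝔼 ω : ι → Ω, ∑ j, |h (ω j)| :=
        expect_le_expect fun _ _ ↦ abs_sum_le_sum_abs _ _
    _ = Fintype.card ι * 𝔼 z, |h z| := by
        simp only [expect_sum_comm, expect_comp_eval _ fun z ↦ |h z|, sum_const, card_univ,
          nsmul_eq_mul]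

lemma expect_abs_sum_le_sqrt {h : Ω → ℝ} (hmean : 𝔼 z, h z = 0) :
    𝔼 ω : ι → Ω, |∑ j, h (ω j)| ≤ √(Fintype.card ι * 𝔼 z, h z ^ 2) := by
  refine Real.le_sqrt_of_sq_le ?_
  have hcauchy := expect_mul_sq_le_sq_mul_sq univ (fun ω : ι → Ω ↦ |∑ j, h (ω j)|) 1
  simpa [expect_sum_sq hmean] using hcauchy

variable {X : Type*} [Fintype X] [Nonempty X]

lemma expect_abs_sum_indicator_sub_le (A : Set X) :
    𝔼 ω : ι → X × X, |∑ j, (A.indicator (1 : X → ℝ) (ω j).1 - A.indicator 1 (ω j).2)| ≤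
      min (Fintype.card ι * (2 * 𝔼 x, A.indicator (1 : X → ℝ) x))
        √(Fintype.card ι * (2 * 𝔼 x, A.indicator (1 : X → ℝ) x)) := by
  set f : X → ℝ := A.indicator 1
  have hval (x : X) : f x = 0 ∨ f x = 1 := by by_cases hx : x ∈ A <;> simp [f, hx]
  have hmean : 𝔼 z : X × X, (f z.1 - f z.2) = 0 := by
    rw [← univ_product_univ, expect_product]
    simp only [expect_sub_distrib, Fintype.expect_const, sub_self]
  have habs : 𝔼 z : X × X, |f z.1 - f z.2| ≤ 2 * 𝔼 x, f x :=
    calc 𝔼 z : X × X, |f z.1 - f z.2| ≤ 𝔼 z : X × X, (f z.1 + f z.2) :=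
          expect_le_expect fun z _ ↦ by
            rcases hval z.1 with h | h <;> rcases hval z.2 with h' | h' <;> norm_num [h, h']
      _ = 2 * 𝔼 x, f x := by
          rw [← univ_product_univ, expect_product]
          simp only [expect_add_distrib, Fintype.expect_const, two_mul]
  have hsq (z : X × X) : (f z.1 - f z.2) ^ 2 = |f z.1 - f z.2| := by
    rcases hval z.1 with h | h <;> rcases hval z.2 with h' | h' <;> norm_num [h, h']
  refine le_min ((expect_abs_sum_le fun z : X × X ↦ f z.1 - f z.2).trans ?_)
    ((expect_abs_sum_le_sqrt hmean).trans ?_)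
  · gcongr
  · simp only [hsq]
    gcongr

end Sampling

section Linearization

open scoped NNReal

variable {V E ι κ : Type*} [NormedAddCommGroup V] [NormedSpace ℝ V] [NormedAddCommGroup E]
  [NormedSpace ℝ E] [CompleteSpace E]

lemma norm_sub_le_integral_norm_fderiv {G : V → E} (hG : ContDiff ℝ 1 G) (x v : V) :
    ‖G (x + v) - G x‖ ≤ ∫ s in (0 : ℝ)..1, ‖fderiv ℝ G (x + s • v) v‖ := by
  have hderiv (s : ℝ) : HasDerivAt (fun s ↦ G (x + s • v)) (fderiv ℝ G (x + s • v) v) s := by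
    have hline : HasDerivAt (fun s : ℝ ↦ x + s • v) v s := by
      simpa using ((hasDerivAt_id s).smul_const v).const_add x
    exact (hG.differentiable one_ne_zero _).hasFDerivAt.comp_hasDerivAt s hline
  have hcont : Continuous fun s : ℝ ↦ fderiv ℝ G (x + s • v) v :=
    ((hG.continuous_fderiv one_ne_zero).comp (by fun_prop)).clm_apply continuous_const
  have hftc := intervalIntegral.integral_eq_sub_of_hasDerivAt (fun s _ ↦ hderiv s)
    (hcont.intervalIntegrable 0 1)
  simp only [one_smul, zero_smul, add_zero] at hftc
  exact hftc ▸ intervalIntegral.norm_integral_le_integral_norm zero_le_one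

variable [FiniteDimensional ℝ V]

lemma exists_contDiff_lipschitzWith_dist_le {F : V → E} {K : ℝ≥0} (hF : LipschitzWith K F)
    (n : ℕ∞) : ∃ G : V → E, ContDiff ℝ n G ∧ LipschitzWith K G ∧ ∀ x, dist (G x) (F x) ≤ K := by
  borelize V
  let φ : ContDiffBump (0 : V) := ⟨2⁻¹, 1, by norm_num, by norm_num⟩
  let ψ := φ.normed Measure.addHaar
  have hintegrable (x : V) : Integrable (fun t ↦ ψ t • F (x - t)) Measure.addHaar :=
    (φ.continuous_normed.smul (hF.continuous.comp (by fun_prop))).integrable_of_hasCompactSupport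
      φ.hasCompactSupport_normed.smul_right
  refine ⟨MeasureTheory.convolution ψ F (ContinuousLinearMap.lsmul ℝ ℝ) Measure.addHaar,
    φ.hasCompactSupport_normed.contDiff_convolution_left _ φ.contDiff_normed
      hF.continuous.locallyIntegrable,
    LipschitzWith.of_dist_le_mul fun x y ↦ ?_, fun x ↦ ?_⟩
  · rw [dist_eq_norm]
    simp only [MeasureTheory.convolution, ContinuousLinearMap.lsmul_apply]
    rw [← integral_sub (hintegrable x) (hintegrable y)]
    simp only [← smul_sub]
    calc ‖∫ t, ψ t • (F (x - t) - F (y - t)) ∂Measure.addHaar‖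
        ≤ ∫ t, ψ t * (K * dist x y) ∂Measure.addHaar := by
          refine norm_integral_le_of_norm_le (φ.integrable_normed.mul_const _)
            (.of_forall fun t ↦ ?_)
          rw [norm_smul, Real.norm_of_nonneg (φ.nonneg_normed t), ← dist_eq_norm]
          gcongr
          · exact φ.nonneg_normed t
          · simpa using hF.dist_le_mul (x - t) (y - t)
      _ = K * dist x y := by rw [integral_mul_const, φ.integral_normed, one_mul]
  · refine φ.dist_normed_convolution_le hF.continuous.aestronglyMeasurable fun y hy ↦ ?_
    refine (hF.dist_le_mul y x).trans (mul_le_of_le_one_right K.2 ?_)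
    exact (Metric.mem_ball.1 hy).le

section Average

variable [MeasurableSpace V] [BorelSpace V] (vol : Measure V) [vol.IsAddHaarMeasure]

lemma setIntegral_closedBall_translate_le {f : V → ℝ} (hf : Continuous f) (hf0 : 0 ≤ f) {w : V}
    {c : ℝ} (hw : ‖w‖ ≤ c) (R : ℝ) :
    ∫ x in Metric.closedBall 0 R, f (x + w) ∂vol ≤
      ∫ x in Metric.closedBall 0 (R + c), f x ∂vol := by
  have hpre : Metric.closedBall (0 : V) R = (· + w) ⁻¹' Metric.closedBall w R := by
    ext x
    simp [dist_eq_norm]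
  rw [hpre, (measurePreserving_add_right vol w).setIntegral_preimage_emb
    (measurableEmbedding_addRight w) f]
  refine setIntegral_mono_set (hf.continuousOn.integrableOn_compact (isCompact_closedBall _ _))
    (.of_forall hf0) (LE.le.eventuallyLE (Metric.closedBall_subset_closedBall' ?_))
  rw [dist_zero_right]
  linarith

lemma mul_measureReal_closedBall_le_of_le_integral_translate {f : V → ℝ} (hf : Continuous f)
    (hf0 : 0 ≤ f) {v : V} {c q : ℝ} (hv : ‖v‖ ≤ c)
    (hq : ∀ x, q ≤ ∫ s in (0 : ℝ)..1, f (x + s • v)) (R : ℝ) :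
    q * vol.real (Metric.closedBall 0 R) ≤ ∫ x in Metric.closedBall 0 (R + c), f x ∂vol := by
  have hjoint : Continuous fun z : V × ℝ ↦ f (z.1 + z.2 • v) := by fun_prop
  have hint : Integrable (fun z : V × ℝ ↦ f (z.1 + z.2 • v))
      ((vol.restrict (Metric.closedBall 0 R)).prod (volume.restrict (Set.Icc 0 1))) := by
    rw [Measure.prod_restrict]
    exact hjoint.continuousOn.integrableOn_compact ((isCompact_closedBall 0 R).prod isCompact_Icc)
  have hfinite : vol (Metric.closedBall 0 R) ≠ ⊤ := measure_closedBall_lt_top.ne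
  simp only [intervalIntegral.integral_of_le zero_le_one, ← integral_Icc_eq_integral_Ioc] at hq
  calc q * vol.real (Metric.closedBall 0 R) = ∫ _x in Metric.closedBall 0 R, q ∂vol := by
        simp [mul_comm]
    _ ≤ ∫ x in Metric.closedBall 0 R, (∫ s in Set.Icc (0 : ℝ) 1, f (x + s • v)) ∂vol :=
        integral_mono (integrableOn_const hfinite) hint.integral_prod_left hq
    _ = ∫ s in Set.Icc (0 : ℝ) 1, ∫ x in Metric.closedBall 0 R, f (x + s • v) ∂vol :=
        integral_integral_swap hint
    _ ≤ ∫ _s in Set.Icc (0 : ℝ) 1, ∫ x in Metric.closedBall 0 (R + c), f x ∂vol := by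
        refine setIntegral_mono_on hint.integral_prod_right (integrableOn_const (by simp))
          measurableSet_Icc fun s hs ↦ setIntegral_closedBall_translate_le vol hf hf0 ?_ R
        rw [norm_smul, Real.norm_of_nonneg hs.1]
        exact (mul_le_of_le_one_left (norm_nonneg v) hs.2).trans hv
    _ = ∫ x in Metric.closedBall 0 (R + c), f x ∂vol := by simp

end Average

variable [Fintype ι]

/-- Large balls are almost invariant under translations, so averaging over them replaces an
invariant mean on `V`. -/
lemma sum_le_of_le_integral_translate {f : ι → V → ℝ} (hf : ∀ i, Continuous (f i))
    (hf0 : ∀ i, 0 ≤ f i) {B : ℝ} (hB : ∀ x, ∑ i, f i x ≤ B) {q : ι → ℝ} {v : ι → V}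
    (hq : ∀ i x, q i ≤ ∫ s in (0 : ℝ)..1, f i (x + s • v i)) : ∑ i, q i ≤ B := by
  borelize V
  obtain ⟨c, hc⟩ : ∃ c, ∀ i, ‖v i‖ ≤ c := Finite.exists_le _
  let vol : Measure V := Measure.addHaar
  let N := Module.finrank ℝ V
  have hball : 0 < vol.real (Metric.closedBall 0 1) :=
    ENNReal.toReal_pos (Metric.measure_closedBall_pos _ _ one_pos).ne' measure_closedBall_lt_top.ne
  have hR : ∀ R : ℝ, 0 < R → 0 < R + c → ∑ i, q i ≤ B * (1 + c / R) ^ N := fun R hR0 hRc ↦ by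
    have hintegrable (i : ι) : IntegrableOn (f i) (Metric.closedBall 0 (R + c)) vol :=
      (hf i).continuousOn.integrableOn_compact (isCompact_closedBall _ _)
    have hle : (∑ i, q i) * vol.real (Metric.closedBall 0 R) ≤
        B * vol.real (Metric.closedBall 0 (R + c)) :=
      calc (∑ i, q i) * vol.real (Metric.closedBall 0 R)
          ≤ ∑ i, ∫ x in Metric.closedBall 0 (R + c), f i x ∂vol := by
            rw [sum_mul]
            exact sum_le_sum fun i _ ↦ mul_measureReal_closedBall_le_of_le_integral_translate vol
              (hf i) (hf0 i) (hc i) (hq i) R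
        _ = ∫ x in Metric.closedBall 0 (R + c), ∑ i, f i x ∂vol :=
            (integral_finsetSum _ fun i _ ↦ hintegrable i).symm
        _ ≤ ∫ _x in Metric.closedBall (0 : V) (R + c), B ∂vol :=
            integral_mono (integrable_finsetSum _ fun i _ ↦ hintegrable i)
              (integrableOn_const measure_closedBall_lt_top.ne) hB
        _ = B * vol.real (Metric.closedBall 0 (R + c)) := by simp [mul_comm]
    rw [Measure.addHaar_real_closedBall' _ _ hR0.le, Measure.addHaar_real_closedBall' _ _ hRc.le,
      ← mul_assoc, ← mul_assoc] at hle
    rw [one_add_div hR0.ne', div_pow, ← mul_div_assoc, le_div_iff₀ (by positivity)]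
    exact le_of_mul_le_mul_right hle hball
  have hlim : Filter.Tendsto (fun R : ℝ ↦ B * (1 + c / R) ^ N) Filter.atTop (nhds B) := by
    simpa using (((Filter.tendsto_id.const_div_atTop c).const_add 1).pow N).const_mul B
  refine ge_of_tendsto hlim ?_
  filter_upwards [Filter.eventually_gt_atTop 0, Filter.eventually_gt_atTop (-c)] with R hR0 hRc
  exact hR R hR0 (by linarith)

lemma le_of_forall_pos_mul_le_mul_add {x y c : ℝ} (h : ∀ L > 0, L * x ≤ L * y + c) : x ≤ y := by
  have hlim : Filter.Tendsto (fun L : ℝ ↦ y + c / L) Filter.atTop (nhds y) := by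
    simpa using (Filter.tendsto_id.const_div_atTop c).const_add y
  refine ge_of_tendsto hlim ?_
  filter_upwards [Filter.eventually_gt_atTop 0] with L hL
  rw [← mul_le_mul_iff_right₀ hL, mul_add, mul_div_cancel₀ _ hL.ne']
  exact h L hL

variable [Fintype κ] {F : V → E} {C D : ℝ≥0} {a : ι → ℝ} {μ : ι → V} {b : κ → ℝ} {e : κ → V}

/-- `F` is smoothed at scale one, and the derivatives of the smoothing are averaged along segments
whose length tends to infinity. -/
lemma sum_mul_norm_le_of_linear (hanti : AntilipschitzWith C F) (hlip : LipschitzWith D F)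
    (ha : ∀ i, 0 ≤ a i) (hb : ∀ j, 0 ≤ b j)
    (hlinear : ∀ T : V →L[ℝ] E, ∑ i, a i * ‖T (μ i)‖ ≤ ∑ j, b j * ‖T (e j)‖) :
    ∑ i, a i * ‖μ i‖ ≤ C * D * ∑ j, b j * ‖e j‖ := by
  obtain ⟨G, hG, hGlip, hGF⟩ := exists_contDiff_lipschitzWith_dist_le hlip 1
  have hderiv (x : V) :
      ∑ i, a i * ‖fderiv ℝ G x (μ i)‖ ≤ D * ∑ j, b j * ‖e j‖ := by
    refine (hlinear _).trans ?_
    rw [mul_sum]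
    refine sum_le_sum fun j _ ↦ ?_
    rw [mul_left_comm]
    exact mul_le_mul_of_nonneg_left ((fderiv ℝ G x).le_of_opNorm_le
      (norm_fderiv_le_of_lipschitz ℝ hGlip) _) (hb j)
  have hsegment (x v : V) :
      ‖v‖ - 2 * C * D ≤ C * ∫ s in (0 : ℝ)..1, ‖fderiv ℝ G (x + s • v) v‖ := by
    have hF : ‖v‖ ≤ C * dist (F (x + v)) (F x) := by simpa using hanti.le_mul_dist (x + v) x
    have hFG := dist_triangle4 (F (x + v)) (G (x + v)) (G x) (F x)
    rw [dist_comm (F (x + v)) (G (x + v)), dist_eq_norm (G _) (G _)] at hFG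
    have := mul_le_mul_of_nonneg_left (hFG.trans (add_le_add (add_le_add (hGF _)
      (norm_sub_le_integral_norm_fderiv hG x v)) (hGF _))) C.2
    simp only [NNReal.val_eq_coe] at this
    linarith
  refine le_of_forall_pos_mul_le_mul_add (c := 2 * C * D * ∑ i, a i) fun L hL ↦ ?_
  have hmean : ∑ i, a i * (‖L • μ i‖ - 2 * C * D) ≤ C * (L * (D * ∑ j, b j * ‖e j‖)) := by
    refine sum_le_of_le_integral_translate
      (f := fun i x ↦ a i * (C * ‖fderiv ℝ G x (L • μ i)‖)) (v := fun i ↦ L • μ i)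
      (fun i ↦ ?_) (fun i x ↦ ?_) (fun x ↦ ?_) (fun i x ↦ ?_)
    · have := (hG.continuous_fderiv one_ne_zero).clm_apply (continuous_const (y := L • μ i))
      fun_prop
    · exact mul_nonneg (ha i) (by positivity)
    · calc ∑ i, a i * (C * ‖fderiv ℝ G x (L • μ i)‖)
          = C * (L * ∑ i, a i * ‖fderiv ℝ G x (μ i)‖) := by
            simp only [mul_sum, map_smul, norm_smul, Real.norm_of_nonneg hL.le]
            exact sum_congr rfl fun i _ ↦ by ring
        _ ≤ _ := by gcongr; exact hderiv x
    · simp only [intervalIntegral.integral_const_mul]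
      exact mul_le_mul_of_nonneg_left (hsegment x _) (ha i)
  simp only [norm_smul, Real.norm_of_nonneg hL.le, mul_sub, sum_sub_distrib, ← sum_mul] at hmean
  simp only [mul_left_comm _ L, ← mul_sum] at hmean
  linarith

end Linearization

section GridDistance

variable {n d : ℕ}

lemma gdist_comm (u v : GridPt n d) : gdist u v = gdist v u :=
  sum_congr rfl fun _ _ ↦ abs_sub_comm _ _

lemma gdist_nonneg (u v : GridPt n d) : 0 ≤ gdist u v := sum_nonneg fun _ _ ↦ abs_nonneg _

lemma gdist_self (u : GridPt n d) : gdist u u = 0 := by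
  simp only [gdist, sub_self, abs_zero, sum_const_zero]

lemma gdist_triangle (u v w : GridPt n d) : gdist u w ≤ gdist u v + gdist v w := by
  rw [gdist, gdist, gdist, ← sum_add_distrib]
  exact sum_le_sum fun i _ ↦ abs_sub_le _ _ _

lemma one_le_gdist {u v : GridPt n d} (huv : u ≠ v) : 1 ≤ gdist u v := by
  obtain ⟨i, hi⟩ := Function.ne_iff.1 huv
  have hint : (1 : ℤ) ≤ |(u i : ℤ) - v i| := Int.one_le_abs (by omega)
  calc (1 : ℝ) ≤ |((u i : ℕ) : ℝ) - ((v i : ℕ) : ℝ)| := by exact_mod_cast hint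
    _ ≤ gdist u v :=
        single_le_sum (f := fun i ↦ |((u i : ℕ) : ℝ) - ((v i : ℕ) : ℝ)|) (fun _ _ ↦ abs_nonneg _)
          (mem_univ i)

lemma gdist_update_succ_le_one (x : GridPt n d) (i : Fin d) :
    gdist (Function.update x i (Order.succ (x i))) x ≤ 1 := by
  have hle : (x i : ℕ) ≤ (Order.succ (x i) : Fin (2 ^ n)) := Order.le_succ (x i)
  have hge : ((Order.succ (x i) : Fin (2 ^ n)) : ℕ) ≤ x i + 1 := by
    by_contra! h
    have hmid : x i < ⟨x i + 1, h.trans (Order.succ (x i)).2⟩ := Nat.lt_succ_self (x i : ℕ)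
    exact (Order.succ_le_of_lt hmid).not_gt h
  have hstep : |(((Order.succ (x i) : Fin (2 ^ n)) : ℕ) : ℝ) - ((x i : ℕ) : ℝ)| ≤ 1 := by
    rw [← Nat.cast_sub hle, Nat.abs_cast]
    exact_mod_cast Nat.sub_le_iff_le_add'.2 hge
  rw [gdist, sum_eq_single i (fun j _ hj ↦ by simp [hj]) (by simp)]
  simpa using hstep

end GridDistance

/-- The transportation cost space `TC([2^n]^d)`: the signed measures of total mass zero on the grid,
given by their point masses. It is a type synonym because the norm is not the one inherited from
`GridPt n d → ℝ`. -/
def TCSpace (n d : ℕ) : Type := {μ : GridPt n d → ℝ // ∑ x, μ x = 0}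

namespace TCSpace

variable {n d : ℕ}

/-- The total mass of a signed measure on the grid. -/
def totalMass (n d : ℕ) : (GridPt n d → ℝ) →ₗ[ℝ] ℝ where
  toFun μ := ∑ x, μ x
  map_add' _ _ := sum_add_distrib
  map_smul' _ _ := (mul_sum _ _ _).symm

instance : AddCommGroup (TCSpace n d) := inferInstanceAs (AddCommGroup (totalMass n d).ker)

instance : Module ℝ (TCSpace n d) := inferInstanceAs (Module ℝ (totalMass n d).ker)

instance : FiniteDimensional ℝ (TCSpace n d) :=
  inferInstanceAs (FiniteDimensional ℝ (totalMass n d).ker)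

/-- The integral `∫ f dμ`, as a linear functional of the measure `μ`. -/
def integral (f : GridPt n d → ℝ) : TCSpace n d →ₗ[ℝ] ℝ where
  toFun μ := ∑ x, f x * μ.1 x
  map_add' μ ν := by
    rw [← sum_add_distrib]
    exact sum_congr rfl fun _ _ ↦ mul_add _ _ _
  map_smul' c μ := by
    rw [RingHom.id_apply, smul_eq_mul, mul_sum]
    exact sum_congr rfl fun _ _ ↦ mul_left_comm _ _ _

lemma integral_eq_sum_sub_mul (f : GridPt n d → ℝ) (c : ℝ) (μ : TCSpace n d) :
    integral f μ = ∑ x, (f x - c) * μ.1 x := by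
  simp only [sub_mul, sum_sub_distrib, ← mul_sum, μ.2, mul_zero, sub_zero]
  rfl

lemma integral_single (x : GridPt n d) (μ : TCSpace n d) :
    integral (Pi.single x 1) μ = μ.1 x := by
  simp [integral, Pi.single_apply]

lemma abs_integral_le_tcNorm {f : GridPt n d → ℝ} (hf : ∀ u v, |f u - f v| ≤ gdist u v)
    (μ : TCSpace n d) : |integral f μ| ≤ tcNorm n d μ.1 := by
  refine le_csSup ⟨∑ x, gdist x 0 * |μ.1 x|, ?_⟩ ⟨f, hf, rfl⟩
  rintro _ ⟨g, hg, rfl⟩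
  calc |integral g μ| ≤ ∑ x, |(g x - g 0) * μ.1 x| :=
        integral_eq_sum_sub_mul g (g 0) μ ▸ abs_sum_le_sum_abs _ _
    _ ≤ ∑ x, gdist x 0 * |μ.1 x| := by
        gcongr with x
        rw [abs_mul]
        exact mul_le_mul_of_nonneg_right (hg x 0) (abs_nonneg _)

lemma tcNorm_le {μ : TCSpace n d} {B : ℝ}
    (hB : ∀ f, (∀ u v, |f u - f v| ≤ gdist u v) → |integral f μ| ≤ B) : tcNorm n d μ.1 ≤ B := by
  refine csSup_le ⟨_, 0, fun u v ↦ by simpa using gdist_nonneg u v, rfl⟩ ?_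
  rintro _ ⟨f, hf, rfl⟩
  exact hB f hf

lemma tcNorm_smul_le (c : ℝ) (μ : TCSpace n d) : tcNorm n d (c • μ).1 ≤ |c| * tcNorm n d μ.1 :=
  tcNorm_le fun f hf ↦ by
    rw [map_smul, smul_eq_mul, abs_mul]
    exact mul_le_mul_of_nonneg_left (abs_integral_le_tcNorm hf μ) (abs_nonneg c)

lemma eq_zero_of_tcNorm_eq_zero {μ : TCSpace n d} (hμ : tcNorm n d μ.1 = 0) : μ = 0 := by
  refine Subtype.ext (funext fun x ↦ ?_)
  have hlip (u v : GridPt n d) :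
      |(Pi.single x 1 : GridPt n d → ℝ) u - (Pi.single x 1 : GridPt n d → ℝ) v| ≤ gdist u v := by
    rcases eq_or_ne u v with rfl | huv
    · simp [gdist_self]
    refine le_trans ?_ (one_le_gdist huv)
    simp only [Pi.single_apply]
    split_ifs <;> norm_num
  have := abs_integral_le_tcNorm hlip μ
  rwa [hμ, integral_single, abs_nonpos_iff] at this

instance : NormedAddCommGroup (TCSpace n d) :=
  AddGroupNorm.toNormedAddCommGroup
    { toFun := fun μ ↦ tcNorm n d μ.1
      map_zero' := (tcNorm_le fun f _ ↦ by rw [map_zero, abs_zero]).antisymm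
        (Real.sSup_nonneg (by rintro _ ⟨f, -, rfl⟩; exact abs_nonneg _))
      add_le' := fun μ ν ↦ tcNorm_le fun f hf ↦ by
        rw [map_add]
        exact (abs_add_le _ _).trans
          (add_le_add (abs_integral_le_tcNorm hf μ) (abs_integral_le_tcNorm hf ν))
      neg' := fun μ ↦ by
        have hneg (μ : TCSpace n d) : tcNorm n d (-μ).1 ≤ tcNorm n d μ.1 := by
          simpa using tcNorm_smul_le (-1) μ
        exact (hneg μ).antisymm (by simpa using hneg (-μ))
      eq_zero_of_map_eq_zero' := fun _ ↦ eq_zero_of_tcNorm_eq_zero }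

lemma norm_def (μ : TCSpace n d) : ‖μ‖ = tcNorm n d μ.1 := rfl

instance : NormedSpace ℝ (TCSpace n d) where
  norm_smul_le := tcNorm_smul_le

/-- The elementary transport `δ_x - δ_y`. -/
def dipole (x y : GridPt n d) : TCSpace n d := ⟨Pi.single x 1 - Pi.single y 1, by simp⟩

@[simp]
lemma integral_dipole (f : GridPt n d → ℝ) (x y : GridPt n d) :
    integral f (dipole x y) = f x - f y := by
  simp [integral, dipole, mul_sub, Pi.single_apply]

lemma norm_dipole (x y : GridPt n d) : ‖dipole x y‖ = gdist x y := by
  refine le_antisymm (tcNorm_le fun f hf ↦ integral_dipole f x y ▸ hf x y) ?_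
  have hlip (u v : GridPt n d) : |gdist u y - gdist v y| ≤ gdist u v := by
    rw [abs_le]
    constructor <;> linarith [gdist_triangle u v y, gdist_triangle v u y, gdist_comm u v]
  have := (le_abs_self _).trans (abs_integral_le_tcNorm hlip (dipole x y))
  rwa [integral_dipole, gdist_self, sub_zero] at this

lemma eq_sum_smul_dipole (μ : TCSpace n d) (o : GridPt n d) : μ = ∑ x, μ.1 x • dipole x o := by
  refine Subtype.ext (funext fun z ↦ ?_)
  rw [← integral_single z μ, ← integral_single z (∑ x, _)]
  simp only [map_sum, map_smul, integral_dipole, smul_eq_mul, mul_sub, sum_sub_distrib, ← sum_mul,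
    μ.2, zero_mul, sub_zero, integral_single]
  simp [Pi.single_apply]

lemma dipole_sub_dipole (x y o : GridPt n d) : dipole x o - dipole y o = dipole x y :=
  Subtype.ext (sub_sub_sub_cancel_right _ _ _)

/-- The unnormalized random measure `∑ j, (δ_{x j} - δ_{y j})`, where `ω j = (x j, y j)`. -/
def sampleDiff {ι : Type*} [Fintype ι] (ω : ι → GridPt n d × GridPt n d) : TCSpace n d :=
  ∑ j, dipole (ω j).1 (ω j).2

lemma integral_sampleDiff {ι : Type*} [Fintype ι] (f : GridPt n d → ℝ)
    (ω : ι → GridPt n d × GridPt n d) :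
    integral f (sampleDiff ω) = ∑ j, (f (ω j).1 - f (ω j).2) := by
  simp only [sampleDiff, map_sum, integral_dipole]

end TCSpace

section Ball

lemma sum_range_pow_le {q : ℝ} (hq : 0 ≤ q) (hq1 : q < 1) (m : ℕ) :
    ∑ k ∈ range m, q ^ k ≤ (1 - q)⁻¹ := by
  simpa using geom_sum_Ico_le_of_lt_one (m := 0) (n := m) hq hq1

lemma sum_pow_natAbs_sub_le {q : ℝ} (hq : 0 ≤ q) (hq1 : q < 1) {m : ℕ} (y : Fin m) :
    ∑ t : Fin m, q ^ ((t : ℤ) - y).natAbs ≤ 2 * (1 - q)⁻¹ := by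
  have hleft : ∑ t ∈ range y, q ^ ((t : ℤ) - (y : ℕ)).natAbs ≤ (1 - q)⁻¹ := by
    rw [← sum_range_reflect]
    refine (sum_le_sum fun k hk ↦ ?_).trans (sum_range_pow_le hq hq1 y)
    have := mem_range.1 hk
    exact pow_le_pow_of_le_one hq hq1.le (by omega)
  have hright : ∑ t ∈ Ico (y : ℕ) m, q ^ ((t : ℤ) - (y : ℕ)).natAbs ≤ (1 - q)⁻¹ := by
    rw [sum_Ico_eq_sum_range]
    refine (sum_le_sum fun k _ ↦ ?_).trans (sum_range_pow_le hq hq1 (m - y))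
    exact pow_le_pow_of_le_one hq hq1.le (by omega)
  rw [Fin.sum_univ_eq_sum_range fun t ↦ q ^ ((t : ℤ) - (y : ℕ)).natAbs,
    ← sum_range_add_sum_Ico _ y.2.le]
  linarith

variable {n d : ℕ}

lemma gdist_eq_sum_natAbs (u v : GridPt n d) :
    gdist u v = ((∑ i, ((u i : ℤ) - v i).natAbs : ℕ) : ℝ) := by
  rw [Nat.cast_sum]
  refine sum_congr rfl fun i _ ↦ ?_
  rw [Nat.cast_natAbs]
  push_cast
  rfl

-- A Chernoff bound: `q ^ gdist z y`, with `q = 1 - 1 / (2ρ)`, factors over the coordinates of `z`.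
lemma card_gdist_lt_le (y : GridPt n d) {ρ : ℕ} (hρ : 0 < ρ) :
    (#{z | gdist z y < d * ρ} : ℝ) ≤ (8 * ρ) ^ d := by
  set q : ℝ := 1 - (2 * (ρ : ℝ))⁻¹ with hq_def
  have hρ' : (1 : ℝ) ≤ ρ := Nat.one_le_cast.2 hρ
  have hinv : (2 * (ρ : ℝ))⁻¹ ≤ 1 := inv_le_one_of_one_le₀ (by linarith)
  have hq : 0 ≤ q := sub_nonneg.2 hinv
  have hq1 : q < 1 := sub_lt_self _ (by positivity)
  have hqρ : 1 / 2 ≤ q ^ ρ := by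
    have := one_add_mul_le_pow (a := -(2 * (ρ : ℝ))⁻¹) (by linarith) ρ
    rw [← sub_eq_add_neg] at this
    refine le_trans (le_of_eq ?_) this
    field_simp
    norm_num
  have hfactor : ∑ z : GridPt n d, q ^ (∑ i, ((z i : ℤ) - y i).natAbs) ≤ (4 * ρ) ^ d :=
    calc ∑ z : GridPt n d, q ^ (∑ i, ((z i : ℤ) - y i).natAbs)
        = ∏ i : Fin d, ∑ t : Fin (2 ^ n), q ^ ((t : ℤ) - y i).natAbs := by
          simp only [prod_univ_sum, Fintype.piFinset_univ, prod_pow_eq_pow_sum]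
      _ ≤ ∏ _i : Fin d, (4 * ρ : ℝ) := by
          refine prod_le_prod (fun i _ ↦ sum_nonneg fun _ _ ↦ pow_nonneg hq _) fun i _ ↦
            (sum_pow_natAbs_sub_le hq hq1 (y i)).trans_eq ?_
          rw [hq_def, sub_sub_cancel, inv_inv]
          ring
      _ = (4 * ρ) ^ d := by simp
  have hmarkov : #{z | gdist z y < d * ρ} * (q ^ ρ) ^ d ≤ (4 * ρ) ^ d := by
    rw [← nsmul_eq_mul, ← pow_mul, mul_comm ρ]
    refine (card_nsmul_le_sum _ _ _ fun z hz ↦ pow_le_pow_of_le_one hq hq1.le ?_).trans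
      ((sum_le_univ_sum_of_nonneg fun _ ↦ pow_nonneg hq _).trans hfactor)
    have hz := (mem_filter.1 hz).2
    rw [gdist_eq_sum_natAbs] at hz
    exact_mod_cast hz.le
  calc (#{z | gdist z y < d * ρ} : ℝ)
      ≤ #{z | gdist z y < d * ρ} * (2 * q ^ ρ) ^ d :=
        le_mul_of_one_le_right (Nat.cast_nonneg _) (one_le_pow₀ (by linarith))
    _ = 2 ^ d * (#{z | gdist z y < d * ρ} * (q ^ ρ) ^ d) := by rw [mul_pow]; ring
    _ ≤ 2 ^ d * (4 * ρ) ^ d := by gcongr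
    _ = (8 * ρ) ^ d := by rw [← mul_pow]; ring

end Ball

section DistanceToSample

open scoped BigOperators

variable {n d : ℕ} {ι : Type*} [Fintype ι] [Nonempty ι]

/-- The ℓ1 distance from `z` to the finite set of points `y j`. -/
def gdistRange (y : ι → GridPt n d) (z : GridPt n d) : ℝ :=
  univ.inf' univ_nonempty fun j ↦ gdist z (y j)

lemma gdistRange_apply (y : ι → GridPt n d) (j : ι) : gdistRange y (y j) = 0 :=
  le_antisymm ((inf'_le _ (mem_univ j)).trans_eq (gdist_self _))
    (le_inf' _ _ fun _ _ ↦ gdist_nonneg _ _)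

lemma gdistRange_le_add (y : ι → GridPt n d) (u v : GridPt n d) :
    gdistRange y u ≤ gdistRange y v + gdist u v := by
  obtain ⟨j, -, hj⟩ := exists_mem_eq_inf' univ_nonempty fun j ↦ gdist v (y j)
  calc gdistRange y u ≤ gdist u (y j) := inf'_le _ (mem_univ j)
    _ ≤ gdist u v + gdist v (y j) := gdist_triangle _ _ _
    _ = gdistRange y v + gdist u v := by rw [gdistRange, hj, add_comm]

lemma abs_gdistRange_sub_le (y : ι → GridPt n d) (u v : GridPt n d) :
    |gdistRange y u - gdistRange y v| ≤ gdist u v := by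
  rw [abs_le]
  constructor <;> linarith [gdistRange_le_add y u v, gdistRange_le_add y v u, gdist_comm u v]

lemma mul_one_sub_sum_le_gdistRange (y : ι → GridPt n d) (z : GridPt n d) {r : ℝ} (hr : 0 ≤ r) :
    r * (1 - ∑ j, if gdist z (y j) < r then 1 else 0) ≤ gdistRange y z := by
  refine le_inf' _ _ fun j _ ↦ ?_
  have hj : (if gdist z (y j) < r then (1 : ℝ) else 0) ≤
      ∑ j, if gdist z (y j) < r then 1 else 0 :=
    single_le_sum (f := fun j ↦ if gdist z (y j) < r then (1 : ℝ) else 0)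
      (fun _ _ ↦ by positivity) (mem_univ j)
  split_ifs at hj with hlt
  · nlinarith [gdist_nonneg z (y j)]
  · nlinarith

lemma le_expect_gdistRange (y : ι → GridPt n d) {ρ : ℕ} (hρ : 0 < ρ)
    (hι : 2 * (Fintype.card ι * (8 * ρ) ^ d) ≤ Fintype.card (GridPt n d)) :
    d * ρ / 2 ≤ 𝔼 z, gdistRange y z := by
  have hι' : 2 * (Fintype.card ι * (8 * ρ : ℝ) ^ d) ≤ Fintype.card (GridPt n d) := by
    exact_mod_cast hι
  rw [Fintype.expect_eq_sum_div_card, le_div_iff₀ (by positivity)]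
  calc d * ρ / 2 * (Fintype.card (GridPt n d) : ℝ)
      ≤ d * ρ * (Fintype.card (GridPt n d) - ∑ _j : ι, (8 * ρ : ℝ) ^ d) := by
        rw [sum_const, card_univ, nsmul_eq_mul]
        have : (0 : ℝ) ≤ d * ρ := by positivity
        nlinarith
    _ ≤ d * ρ * (Fintype.card (GridPt n d) - ∑ j, (#{z | gdist z (y j) < d * ρ} : ℝ)) := by
        gcongr with j
        exact card_gdist_lt_le (y j) hρ
    _ = ∑ z, d * ρ * (1 - ∑ j, if gdist z (y j) < d * ρ then (1 : ℝ) else 0) := by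
        rw [← mul_sum, sum_sub_distrib, sum_comm]
        simp
    _ ≤ ∑ z, gdistRange y z :=
        sum_le_sum fun z _ ↦ mul_one_sub_sum_le_gdistRange y z (by positivity)

-- The distance to the points `y j` is a 1-Lipschitz test function vanishing at all of them.
lemma TCSpace.le_expect_norm_sampleDiff [DecidableEq ι] {ρ : ℕ} (hρ : 0 < ρ)
    (hι : 2 * (Fintype.card ι * (8 * ρ) ^ d) ≤ Fintype.card (GridPt n d)) :
    Fintype.card ι * (d * ρ / 2) ≤
      𝔼 ω : ι → GridPt n d × GridPt n d, ‖TCSpace.sampleDiff ω‖ :=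
  calc Fintype.card ι * (d * ρ / 2)
      = 𝔼 _y : ι → GridPt n d, Fintype.card ι * (d * ρ / 2 : ℝ) := (Fintype.expect_const _).symm
    _ ≤ 𝔼 y : ι → GridPt n d, Fintype.card ι * 𝔼 z, gdistRange y z :=
        expect_le_expect fun y _ ↦ by gcongr; exact le_expect_gdistRange y hρ hι
    _ = 𝔼 y : ι → GridPt n d, 𝔼 x : ι → GridPt n d, ∑ j, gdistRange y (x j) := by
        simp only [expect_sum_comm, expect_comp_eval, sum_const, card_univ, nsmul_eq_mul]
    _ = 𝔼 ω : ι → GridPt n d × GridPt n d, ∑ j, gdistRange (fun j ↦ (ω j).2) (ω j).1 := by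
        rw [expect_comm, ← expect_product (f := fun p : (ι → GridPt n d) × (ι → GridPt n d) ↦
          ∑ j, gdistRange p.2 (p.1 j)), univ_product_univ]
        exact (Fintype.expect_equiv (Equiv.arrowProdEquivProdArrow ι _ _) _ _ fun _ ↦ rfl).symm
    _ ≤ 𝔼 ω : ι → GridPt n d × GridPt n d, ‖TCSpace.sampleDiff ω‖ :=
        expect_le_expect fun ω _ ↦ by
          have hzero (j : ι) : gdistRange (fun j ↦ (ω j).2) (ω j).2 = 0 := gdistRange_apply _ j
          have := (le_abs_self _).trans <| TCSpace.abs_integral_le_tcNorm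
            (abs_gdistRange_sub_le fun j ↦ (ω j).2) (TCSpace.sampleDiff ω)
          simpa only [TCSpace.integral_sampleDiff, hzero, sub_zero, TCSpace.norm_def] using this

end DistanceToSample

section Scales

lemma sum_min_mul_pow_le {q x : ℝ} (hq : 1 < q) (hx : 0 < x) (N : ℕ) :
    ∑ i ∈ range N, min (x * q ^ i) (x * q ^ i)⁻¹ ≤ 2 * (q + 1) / (q - 1) := by
  have hq' : 0 < q - 1 := sub_pos.2 hq
  -- `min w w⁻¹` is dominated by the increment of `w / (1 + w)` from `w` to `q w`.
  have hstep {w : ℝ} (hw : 0 < w) :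
      min w w⁻¹ ≤ 2 * (q + 1) / (q - 1) * (w * q / (1 + w * q) - w / (1 + w)) := by
    have hincr : 2 * (q + 1) / (q - 1) * (w * q / (1 + w * q) - w / (1 + w)) =
        2 * (q + 1) * w / ((1 + w * q) * (1 + w)) := by
      field_simp
      ring
    rw [hincr, le_div_iff₀ (by positivity)]
    rcases le_total w 1 with hw1 | hw1
    · calc min w w⁻¹ * ((1 + w * q) * (1 + w)) ≤ w * ((1 + 1 * q) * (1 + 1)) := by
            gcongr
            exact min_le_left _ _
        _ = 2 * (q + 1) * w := by ring
    · calc min w w⁻¹ * ((1 + w * q) * (1 + w)) ≤ w⁻¹ * ((w + w * q) * (w + w)) := by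
            gcongr
            exact min_le_right _ _
        _ = 2 * (q + 1) * w := by field_simp; ring
  have hlast : x * q ^ N / (1 + x * q ^ N) ≤ 1 := (div_le_one (by positivity)).2 (by linarith)
  have hfirst : 0 ≤ x / (1 + x) := by positivity
  calc ∑ i ∈ range N, min (x * q ^ i) (x * q ^ i)⁻¹
      ≤ ∑ i ∈ range N, 2 * (q + 1) / (q - 1) *
          (x * q ^ (i + 1) / (1 + x * q ^ (i + 1)) - x * q ^ i / (1 + x * q ^ i)) :=
        sum_le_sum fun i _ ↦ by
          simpa only [pow_succ, mul_assoc] using hstep (mul_pos hx (pow_pos (by linarith) i))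
    _ = 2 * (q + 1) / (q - 1) * (x * q ^ N / (1 + x * q ^ N) - x / (1 + x)) := by
        rw [← mul_sum, sum_range_sub fun i ↦ x * q ^ i / (1 + x * q ^ i), pow_zero, mul_one]
    _ ≤ 2 * (q + 1) / (q - 1) := mul_le_of_le_one_right (by positivity) (by linarith)

lemma sum_min_mul_sqrt_two_pow_le {x : ℝ} (hx : 0 < x) (N : ℕ) :
    ∑ i ∈ range N, min (x * √2 ^ i) (x * √2 ^ i)⁻¹ ≤ 12 := by
  refine (sum_min_mul_pow_le Real.one_lt_sqrt_two hx N).trans ?_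
  rw [div_le_iff₀ (sub_pos.2 Real.one_lt_sqrt_two)]
  have : (1.4 : ℝ) ≤ √2 := Real.le_sqrt_of_sq_le (by norm_num)
  linarith

lemma sq_mul_min_le_of_one_le {d : ℕ} (hd : 3 ≤ d) {w : ℝ} (hw : 1 ≤ w) :
    w ^ 2 * min 1 (w ^ d)⁻¹ ≤ (w ^ (d - 3))⁻¹ * min w w⁻¹ := by
  obtain ⟨e, rfl⟩ := Nat.exists_eq_add_of_le hd
  rw [Nat.add_sub_cancel_left, min_eq_right ((inv_le_one_of_one_le₀ hw).trans hw)]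
  calc w ^ 2 * min 1 (w ^ (3 + e))⁻¹ ≤ w ^ 2 * (w ^ (3 + e))⁻¹ := by
        gcongr
        exact min_le_right _ _
    _ = (w ^ e)⁻¹ * w⁻¹ := by
        field_simp
        ring

lemma sq_mul_min_le {d : ℕ} (hd : 3 ≤ d) {w : ℝ} (hw : 0 < w) :
    w ^ 2 * min 1 (w ^ d)⁻¹ ≤ min w w⁻¹ := by
  rcases le_total w 1 with hw1 | hw1
  · calc w ^ 2 * min 1 (w ^ d)⁻¹ ≤ w ^ 2 * 1 := by
          gcongr
          exact min_le_left _ _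
      _ ≤ w := by nlinarith
      _ = min w w⁻¹ := (min_eq_left (hw1.trans ((one_le_inv₀ hw).2 hw1))).symm
  · exact (sq_mul_min_le_of_one_le hd hw1).trans
      (mul_le_of_le_one_left (by positivity) (inv_le_one_of_one_le₀ (one_le_pow₀ hw1)))

lemma sq_mul_min_le_of_two_le {d : ℕ} (hd : 3 ≤ d) {w : ℝ} (hw : 2 ≤ w) :
    w ^ 2 * min 1 (w ^ d)⁻¹ ≤ 3 / d * min w w⁻¹ := by
  refine (sq_mul_min_le_of_one_le hd (by linarith)).trans ?_
  obtain ⟨e, rfl⟩ := Nat.exists_eq_add_of_le hd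
  have hpow : ((3 + e : ℕ) : ℝ) / 3 ≤ w ^ e := by
    have := one_add_mul_le_pow (a := w - 1) (by linarith) e
    rw [add_sub_cancel] at this
    push_cast
    nlinarith [(Nat.cast_nonneg e : (0 : ℝ) ≤ e)]
  rw [Nat.add_sub_cancel_left, ← inv_div]
  gcongr

lemma sum_sq_mul_min_le {d : ℕ} (hd : 3 ≤ d) {β : ℝ} (hβ : 0 < β) (hβd : β ^ d ≤ 1 / 2) (N : ℕ) :
    ∑ i ∈ range N, √(2 ^ (i + 3) * β) ^ 2 * min 1 (√(2 ^ (i + 3) * β) ^ d)⁻¹ ≤ 72 * (1 - β) := by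
  have hw (i : ℕ) : √(2 ^ (i + 3) * β) = √(8 * β) * √2 ^ i := by
    have hsq : 2 ^ (i + 3) * β = (√(8 * β) * √2 ^ i) ^ 2 := by
      rw [mul_pow, pow_right_comm, Real.sq_sqrt (by positivity), Real.sq_sqrt zero_le_two]
      ring
    rw [hsq, Real.sqrt_sq (by positivity)]
  have hgeom := sum_min_mul_sqrt_two_pow_le (Real.sqrt_pos.2 (by positivity : 0 < 8 * β)) N
  rcases le_total β (1 / 2) with hβ2 | hβ2
  · have : ∑ i ∈ range N, √(2 ^ (i + 3) * β) ^ 2 * min 1 (√(2 ^ (i + 3) * β) ^ d)⁻¹ ≤ 12 :=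
      (sum_le_sum fun i _ ↦ hw i ▸ sq_mul_min_le hd (by positivity)).trans hgeom
    linarith
  · have hbernoulli : 1 / 2 ≤ d * (1 - β) := by
      have := one_add_mul_le_pow (a := β - 1) (by linarith) d
      rw [add_sub_cancel] at this
      linarith
    have hterm (i : ℕ) :
        √(2 ^ (i + 3) * β) ^ 2 * min 1 (√(2 ^ (i + 3) * β) ^ d)⁻¹ ≤
          3 / d * min (√(8 * β) * √2 ^ i) (√(8 * β) * √2 ^ i)⁻¹ := by
      rw [← hw]
      refine sq_mul_min_le_of_two_le hd (Real.le_sqrt_of_sq_le ?_)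
      have : (1 : ℝ) ≤ 2 ^ i := one_le_pow₀ one_le_two
      rw [pow_add]
      nlinarith
    calc ∑ i ∈ range N, √(2 ^ (i + 3) * β) ^ 2 * min 1 (√(2 ^ (i + 3) * β) ^ d)⁻¹
        ≤ 3 / d * 12 := by
          refine (sum_le_sum fun i _ ↦ hterm i).trans ?_
          rw [← mul_sum]
          gcongr
      _ ≤ 72 * (1 - β) := by
          rw [div_mul_eq_mul_div, div_le_iff₀ (by positivity)]
          linarith

lemma div_mul_min_sqrt_le {d r : ℕ} (hd : d ≠ 0) {β : ℝ} (hβ : 0 < β) :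
    2 ^ r / 2 ^ (r * d) * min (2 ^ (r * d) * (2 * β ^ d)) √(2 ^ (r * d) * (2 * β ^ d)) ≤
      2 * β ^ (d - 1) * (√(2 ^ r * β) ^ 2 * min 1 (√(2 ^ r * β) ^ d)⁻¹) := by
  set w := √(2 ^ r * β) with hw_def
  have hw : 0 < w := Real.sqrt_pos.2 (by positivity)
  have hmass : 2 ^ (r * d) * β ^ d = (w ^ d) ^ 2 := by
    rw [pow_right_comm, Real.sq_sqrt (by positivity), mul_pow, pow_mul]
  have hsqrt : √(2 ^ (r * d) * (2 * β ^ d)) ≤ 2 * w ^ d := by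
    rw [mul_left_comm, hmass, Real.sqrt_le_left (by positivity)]
    nlinarith [sq_nonneg (w ^ d)]
  have hmin : min (2 * (w ^ d) ^ 2) (2 * w ^ d) =
      2 * (2 ^ (r * d) * β ^ d) * min 1 (w ^ d)⁻¹ := by
    rw [hmass, mul_min_of_nonneg _ _ (by positivity), mul_one]
    field_simp
  calc 2 ^ r / 2 ^ (r * d) * min (2 ^ (r * d) * (2 * β ^ d)) √(2 ^ (r * d) * (2 * β ^ d))
      ≤ 2 ^ r / 2 ^ (r * d) * min (2 * (w ^ d) ^ 2) (2 * w ^ d) :=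
        mul_le_mul_of_nonneg_left
          (min_le_min (by rw [mul_left_comm, hmass]) hsqrt) (by positivity)
    _ = 2 * β ^ (d - 1) * (2 ^ r * β * min 1 (w ^ d)⁻¹) := by
        rw [hmin, ← pow_sub_one_mul hd β]
        field_simp
    _ = 2 * β ^ (d - 1) * (w ^ 2 * min 1 (w ^ d)⁻¹) := by
        rw [hw_def, Real.sq_sqrt (by positivity)]

end Scales

section CutInequality

open scoped BigOperators

variable {n d : ℕ}

/-- The expected difference between the numbers of points of `A` in two independent uniform samples
of `M` grid points. -/
def sampleDiscrepancy (M : ℕ) (A : Set (GridPt n d)) : ℝ :=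
  𝔼 ω : Fin M → GridPt n d × GridPt n d,
    |∑ j, (A.indicator (1 : GridPt n d → ℝ) (ω j).1 - A.indicator 1 (ω j).2)|

lemma sampleDiscrepancy_le (M : ℕ) (A : Set (GridPt n d)) :
    sampleDiscrepancy M A ≤ min (M * (2 * 𝔼 x, A.indicator (1 : GridPt n d → ℝ) x))
      √(M * (2 * 𝔼 x, A.indicator (1 : GridPt n d → ℝ) x)) := by
  simpa only [sampleDiscrepancy, Fintype.card_fin] using
    expect_abs_sum_indicator_sub_le (ι := Fin M) A

lemma edgeVariation_nonneg (f : GridPt n d → ℝ) : 0 ≤ edgeVariation f :=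
  sum_nonneg fun _ _ ↦ sum_nonneg fun _ _ ↦ abs_nonneg _

lemma sum_sampleDiscrepancy_le_of_expect_le_half (hd : 3 ≤ d) {A : Set (GridPt n d)}
    (hA : 𝔼 x, A.indicator (1 : GridPt n d → ℝ) x ≤ 1 / 2) (N : ℕ) :
    ∑ i ∈ range N, 2 ^ (i + 3) / 2 ^ ((i + 3) * d) * sampleDiscrepancy (2 ^ ((i + 3) * d)) A ≤
      144 / (d * (2 ^ n) ^ (d - 1)) * edgeVariation (A.indicator 1) := by
  set α := 𝔼 x, A.indicator (1 : GridPt n d → ℝ) x with hα_def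
  have hα : 0 ≤ α := expect_nonneg fun _ _ ↦ Set.indicator_nonneg (fun _ _ ↦ zero_le_one) _
  rcases hα.eq_or_lt with hα0 | hα0
  · refine le_trans (sum_nonpos fun i _ ↦ mul_nonpos_of_nonneg_of_nonpos (by positivity) ?_)
      (mul_nonneg (by positivity) (edgeVariation_nonneg _))
    simpa only [← hα_def, ← hα0, mul_zero, Real.sqrt_zero, min_self] using
      sampleDiscrepancy_le (2 ^ ((i + 3) * d)) A
  obtain ⟨β, hβ, hβα⟩ : ∃ β : ℝ, 0 < β ∧ β ^ d = α :=
    ⟨α ^ (d⁻¹ : ℝ), by positivity, Real.rpow_inv_natCast_pow hα (by omega)⟩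
  have hscale (i : ℕ) :
      2 ^ (i + 3) / 2 ^ ((i + 3) * d) * sampleDiscrepancy (2 ^ ((i + 3) * d)) A ≤
        2 * β ^ (d - 1) * (√(2 ^ (i + 3) * β) ^ 2 * min 1 (√(2 ^ (i + 3) * β) ^ d)⁻¹) := by
    refine le_trans ?_ (div_mul_min_sqrt_le (by omega) hβ)
    have := sampleDiscrepancy_le (2 ^ ((i + 3) * d)) A
    rw [← hα_def, ← hβα] at this
    push_cast at this
    gcongr
  have hisoperimetry : d * (2 ^ n * β) ^ (d - 1) * (1 - β) ≤ edgeVariation (A.indicator 1) := by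
    have hmass : ∑ x, A.indicator (1 : GridPt n d → ℝ) x = (2 ^ n * β) ^ d := by
      rw [mul_pow, hβα, hα_def, ← Fintype.card_mul_expect]
      simp
    have := isoperimetric_edgeVariation A (by positivity) hmass
    simpa using this
  calc ∑ i ∈ range N, 2 ^ (i + 3) / 2 ^ ((i + 3) * d) * sampleDiscrepancy (2 ^ ((i + 3) * d)) A
      ≤ 2 * β ^ (d - 1) * (72 * (1 - β)) := by
        refine (sum_le_sum fun i _ ↦ hscale i).trans ?_
        rw [← mul_sum]
        gcongr
        exact sum_sq_mul_min_le hd hβ (hβα ▸ hA) N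
    _ = 144 / (d * (2 ^ n) ^ (d - 1)) * (d * (2 ^ n * β) ^ (d - 1) * (1 - β)) := by
        rw [mul_pow]
        field_simp
        ring
    _ ≤ 144 / (d * (2 ^ n) ^ (d - 1)) * edgeVariation (A.indicator 1) := by gcongr

lemma indicator_compl_sub (A : Set (GridPt n d)) (x y : GridPt n d) :
    Aᶜ.indicator (1 : GridPt n d → ℝ) x - Aᶜ.indicator 1 y =
      -(A.indicator 1 x - A.indicator 1 y) := by
  simp only [Set.indicator_compl, Pi.sub_apply, Pi.one_apply]
  ring

lemma sum_sampleDiscrepancy_le (hd : 3 ≤ d) (A : Set (GridPt n d)) (N : ℕ) :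
    ∑ i ∈ range N, 2 ^ (i + 3) / 2 ^ ((i + 3) * d) * sampleDiscrepancy (2 ^ ((i + 3) * d)) A ≤
      144 / (d * (2 ^ n) ^ (d - 1)) * edgeVariation (A.indicator 1) := by
  rcases le_total (𝔼 x, A.indicator (1 : GridPt n d → ℝ) x) (1 / 2) with hA | hA
  · exact sum_sampleDiscrepancy_le_of_expect_le_half hd hA N
  have hcompl : 𝔼 x, Aᶜ.indicator (1 : GridPt n d → ℝ) x ≤ 1 / 2 := by
    simp only [Set.indicator_compl, Pi.sub_apply, Pi.one_apply, expect_sub_distrib,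
      Fintype.expect_const]
    linarith
  simpa only [sampleDiscrepancy, edgeVariation, indicator_compl_sub, sum_neg_distrib, abs_neg] using
    sum_sampleDiscrepancy_le_of_expect_le_half hd hcompl N

end CutInequality

section ScaleSample

open scoped BigOperators

variable {n d N : ℕ}

/-- A dyadic scale together with two samples of grid points, of the size used at that scale. -/
abbrev ScaleSample (n d N : ℕ) : Type :=
  Σ i : Fin N, (Fin (2 ^ ((i + 3 : ℕ) * d)) → GridPt n d × GridPt n d)

/-- The weight of a pair of samples: the uniform probability measure on the pairs at each scale,
normalized so that the average transportation cost is comparable to `2 ^ n * d` at every scale. -/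
def ScaleSample.weight (p : ScaleSample n d N) : ℝ :=
  2 ^ (p.1 + 3 : ℕ) / 2 ^ ((p.1 + 3 : ℕ) * d) /
    Fintype.card (Fin (2 ^ ((p.1 + 3 : ℕ) * d)) → GridPt n d × GridPt n d)

lemma ScaleSample.weight_nonneg (p : ScaleSample n d N) : 0 ≤ p.weight := by
  unfold weight
  positivity

lemma ScaleSample.sum_weight_mul (g : ScaleSample n d N → ℝ) :
    ∑ p, p.weight * g p =
      ∑ i : Fin N, 2 ^ (i + 3 : ℕ) / 2 ^ ((i + 3 : ℕ) * d) * 𝔼 ω, g ⟨i, ω⟩ := by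
  rw [Fintype.sum_sigma]
  refine sum_congr rfl fun i _ ↦ ?_
  rw [Fintype.expect_eq_sum_div_card, ← mul_div_assoc, mul_div_right_comm, mul_sum]
  rfl

lemma ScaleSample.sum_weight_mul_abs_indicator_le (hd : 3 ≤ d) (A : Set (GridPt n d)) :
    ∑ p : ScaleSample n d N,
        p.weight * |∑ j, (A.indicator (1 : GridPt n d → ℝ) (p.2 j).1 - A.indicator 1 (p.2 j).2)| ≤
      144 / (d * (2 ^ n) ^ (d - 1)) * edgeVariation (A.indicator 1) := by
  rw [sum_weight_mul fun p ↦
    |∑ j, (A.indicator (1 : GridPt n d → ℝ) (p.2 j).1 - A.indicator 1 (p.2 j).2)|]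
  refine le_of_eq_of_le ?_ (sum_sampleDiscrepancy_le hd A N)
  exact Fin.sum_univ_eq_sum_range
    (fun i ↦ 2 ^ (i + 3) / 2 ^ ((i + 3) * d) * sampleDiscrepancy (2 ^ ((i + 3) * d)) A) N

lemma le_expect_norm_sampleDiff_scale {i : ℕ} (hd : d ≠ 0) (hi : i + 7 ≤ n) :
    d * 2 ^ n / 32 ≤ 2 ^ (i + 3) / 2 ^ ((i + 3) * d) *
      𝔼 ω : Fin (2 ^ ((i + 3) * d)) → GridPt n d × GridPt n d, ‖TCSpace.sampleDiff ω‖ := by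
  obtain ⟨k, rfl⟩ := Nat.exists_eq_add_of_le' hi
  set n := k + (i + 7) with hn
  have hsize : 2 * (Fintype.card (Fin (2 ^ ((i + 3) * d))) * (8 * 2 ^ k) ^ d) ≤
      Fintype.card (GridPt n d) :=
    calc 2 * (Fintype.card (Fin (2 ^ ((i + 3) * d))) * (8 * 2 ^ k) ^ d)
        = 2 ^ 1 * (2 ^ (k + (i + 6))) ^ d := by
          rw [Fintype.card_fin, pow_mul, ← mul_pow, pow_one]
          ring
      _ ≤ 2 ^ d * (2 ^ (k + (i + 6))) ^ d := by
          gcongr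
          · norm_num
          · omega
      _ = Fintype.card (GridPt n d) := by
          rw [← mul_pow, ← pow_succ', Fintype.card_pi_const, Fintype.card_fin]
          rfl
  have hlower := TCSpace.le_expect_norm_sampleDiff (pow_pos two_pos k) hsize
  rw [Fintype.card_fin] at hlower
  push_cast at hlower
  calc (d * 2 ^ n / 32 : ℝ)
      = 2 ^ (i + 3) / 2 ^ ((i + 3) * d) * (2 ^ ((i + 3) * d) * (d * 2 ^ k / 2)) := by
        rw [hn]
        field_simp
        ring
    _ ≤ _ := by gcongr

lemma ScaleSample.le_sum_weight_mul_norm (hd : d ≠ 0) :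
    ((n : ℝ) - 6) * (d * 2 ^ n / 32) ≤
      ∑ p : ScaleSample n d (n - 6), p.weight * ‖TCSpace.sampleDiff p.2‖ := by
  rw [sum_weight_mul fun p ↦ ‖TCSpace.sampleDiff p.2‖]
  calc ((n : ℝ) - 6) * (d * 2 ^ n / 32) ≤ ((n - 6 : ℕ) : ℝ) * (d * 2 ^ n / 32) := by
        gcongr
        exact sub_le_iff_le_add.2 (by exact_mod_cast le_tsub_add)
    _ = ∑ _i : Fin (n - 6), (d * 2 ^ n / 32 : ℝ) := by simp
    _ ≤ _ := sum_le_sum fun i _ ↦ le_expect_norm_sampleDiff_scale hd (by omega)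

end ScaleSample

section Distortion

variable {S : Type*} [MeasurableSpace S] {ν : Measure S} {n d N : ℕ}

/-- The elementary transport along the edge of the grid that leaves `e.1` in the direction `e.2`;
it is zero if there is no such edge. -/
def TCSpace.edge (e : GridPt n d × Fin d) : TCSpace n d :=
  dipole (Function.update e.1 e.2 (Order.succ (e.1 e.2))) e.1

lemma TCSpace.norm_edge_le_one (e : GridPt n d × Fin d) : ‖edge e‖ ≤ 1 :=
  (norm_dipole _ _).trans_le (gdist_update_succ_le_one _ _)

lemma TCSpace.map_eq_sum_smul (T : TCSpace n d →L[ℝ] Lp ℝ 1 ν) (μ : TCSpace n d)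
    (o : GridPt n d) : T μ = ∑ x, μ.1 x • T (dipole x o) := by
  conv_lhs => rw [eq_sum_smul_dipole μ o, map_sum]
  simp only [map_smul]

lemma ScaleSample.sum_weight_mul_norm_map_le (hd : 3 ≤ d) (T : TCSpace n d →L[ℝ] Lp ℝ 1 ν) :
    ∑ p : ScaleSample n d N, p.weight * ‖T (TCSpace.sampleDiff p.2)‖ ≤
      ∑ e, 144 / (d * (2 ^ n) ^ (d - 1)) * ‖T (TCSpace.edge e)‖ := by
  have hcut (A : Set (GridPt n d)) :
      ∑ p : ScaleSample n d N,
          p.weight * |∑ x, A.indicator 1 x * (TCSpace.sampleDiff p.2).1 x| ≤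
        ∑ e : GridPt n d × Fin d, 144 / (d * (2 ^ n) ^ (d - 1)) *
          |A.indicator (1 : GridPt n d → ℝ) (Function.update e.1 e.2 (Order.succ (e.1 e.2))) -
            A.indicator 1 e.1| := by
    rw [← mul_sum, Fintype.sum_prod_type]
    refine (sum_congr rfl fun p _ ↦ ?_).trans_le (sum_weight_mul_abs_indicator_le (N := N) hd A)
    rw [← TCSpace.integral_sampleDiff]
    rfl
  have := sum_mul_norm_le_of_cut weight_nonneg (fun p ↦ (TCSpace.sampleDiff p.2).2) hcut
    fun x ↦ T (TCSpace.dipole x 0)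
  simpa only [← map_sub, TCSpace.dipole_sub_dipole, ← TCSpace.map_eq_sum_smul, TCSpace.edge]
    using this

theorem sub_six_mul_le_of_lipschitzWith (hd : 3 ≤ d) {F : TCSpace n d → Lp ℝ 1 ν} {C D : NNReal}
    (hanti : AntilipschitzWith C F) (hlip : LipschitzWith D F) :
    4608⁻¹ * ((n : ℝ) - 6) * d ≤ C * D := by
  have hupper := sum_mul_norm_le_of_linear hanti hlip ScaleSample.weight_nonneg
    (fun _ ↦ by positivity)
    fun T ↦ ScaleSample.sum_weight_mul_norm_map_le (N := n - 6) hd T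
  have hedges : ∑ e : GridPt n d × Fin d, 144 / (d * (2 ^ n) ^ (d - 1)) * ‖TCSpace.edge e‖ ≤
      144 * 2 ^ n :=
    calc ∑ e : GridPt n d × Fin d, 144 / (d * (2 ^ n) ^ (d - 1)) * ‖TCSpace.edge e‖
        ≤ ∑ _e : GridPt n d × Fin d, 144 / (d * (2 ^ n : ℝ) ^ (d - 1)) :=
          sum_le_sum fun e _ ↦ mul_le_of_le_one_right (by positivity) (TCSpace.norm_edge_le_one e)
      _ = (2 ^ n) ^ (d - 1) * 2 ^ n * d * (144 / (d * (2 ^ n) ^ (d - 1))) := by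
          rw [pow_sub_one_mul (by omega)]
          simp
      _ = 144 * 2 ^ n := by field_simp
  have hlower := ScaleSample.le_sum_weight_mul_norm (n := n) (d := d) (by omega)
  have : ((n : ℝ) - 6) * (d * 2 ^ n / 32) ≤ C * D * (144 * 2 ^ n) :=
    hlower.trans (hupper.trans (by gcongr))
  rw [← sub_nonneg] at this ⊢
  refine nonneg_of_mul_nonneg_right (this.trans_eq ?_) (by positivity : (0 : ℝ) < 144 * 2 ^ n)
  ring

end Distortion

theorem tc_grid_distortion_lower_general {S : Type*} [MeasurableSpace S] {ν : Measure S} {n d : ℕ}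
    (hn : 1 ≤ n) (hd : 3 ≤ d) {D : ℝ} {F : {μ : GridPt n d → ℝ // ∑ x, μ x = 0} → Lp ℝ 1 ν}
    (hF : ∀ μ μ' : {μ : GridPt n d → ℝ // ∑ x, μ x = 0},
      tcNorm n d (μ.1 - μ'.1) ≤ ‖F μ - F μ'‖ ∧ ‖F μ - F μ'‖ ≤ D * tcNorm n d (μ.1 - μ'.1)) :
    4608⁻¹ * ((n : ℝ) - 6) * d ≤ D := by
  have : Nontrivial (Fin (2 ^ n)) := Fin.nontrivial_iff_two_le.2 (Nat.le_self_pow (by omega) 2)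
  have : Nonempty (Fin d) := ⟨⟨0, by omega⟩⟩
  obtain ⟨x, y, hxy⟩ := exists_pair_ne (GridPt n d)
  have hpos : 0 < ‖TCSpace.dipole x y‖ :=
    zero_lt_one.trans_le ((one_le_gdist hxy).trans_eq (TCSpace.norm_dipole x y).symm)
  have hbounds (μ μ' : TCSpace n d) : dist μ μ' ≤ dist (F μ) (F μ') ∧
      dist (F μ) (F μ') ≤ D * dist μ μ' := by
    simp only [dist_eq_norm]
    exact hF μ μ'
  have hD : 0 ≤ D := by
    have := (hbounds (TCSpace.dipole x y) 0).1.trans (hbounds _ _).2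
    rw [dist_zero_right] at this
    exact nonneg_of_mul_nonneg_left (hpos.le.trans this) hpos
  lift D to NNReal using hD
  have hanti : AntilipschitzWith (α := TCSpace n d) 1 F :=
    AntilipschitzWith.of_le_mul_dist fun μ μ' ↦ by
      rw [NNReal.coe_one, one_mul]
      exact (hbounds μ μ').1
  have hlip : LipschitzWith (α := TCSpace n d) D F :=
    LipschitzWith.of_dist_le_mul fun μ μ' ↦ (hbounds μ μ').2
  simpa using sub_six_mul_le_of_lipschitzWith hd hanti hlip

/-- There is a universal constant `C` (independent of `n, d`) such that every embedding of
`TC([2^n]^d)` into `L_1` with bi-Lipschitz distortion at most `D` satisfies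
`D ≥ C⁻¹·(n-23)·d`. -/
theorem tc_grid_distortion_lower :
    ∃ C : ℝ, 0 < C ∧ ∀ (n d : ℕ), 1 ≤ n → 3 ≤ d → ∀ (D : ℝ)
      (F : {μ : GridPt n d → ℝ // ∑ x, μ x = 0} → L1Space),
        (∀ μ ν : {μ : GridPt n d → ℝ // ∑ x, μ x = 0},
            tcNorm n d (μ.1 - ν.1) ≤ ‖F μ - F ν‖ ∧
            ‖F μ - F ν‖ ≤ D * tcNorm n d (μ.1 - ν.1)) →
        C⁻¹ * ((n:ℝ) - 23) * d ≤ D := by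
  refine ⟨4608, by norm_num, fun n d hn hd D F hF ↦
    le_trans ?_ (tc_grid_distortion_lower_general hn hd hF)⟩
  gcongr
  norm_num
end
end

section
/- Let n, d, k be integers with d ≥ 3 and 1 ≤ k ≤ n, and let A ⊆ [2^n]^d be nonempty. Then E[|μ_k(A)|] ≤ 2^k·Vol(A)·min{1, (p·2^{kd}·Vol(A))^{−1/2}}. -/
/-!
Two bounds on `E|μ_k(A)|` are combined. The triangle inequality and `E|X_Q| = p` give
`E|μ_k(A)| ≤ 2^k Vol(A)`. Since the `X_Q` are independent and centred with `E[X_Q²] = p`,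
Cauchy–Schwarz gives `(E|μ_k(A)|)² ≤ p⁻¹ 4^k ∑_Q Vol(A ∩ Q)²`, and the last sum is at most
`max_Q Vol(Q) · ∑_Q Vol(A ∩ Q) = 2^{-kd} Vol(A)`.
-/

open MeasureTheory Finset

noncomputable section

/-- Indices of the dyadic cubes in `D_k`. -/
abbrev CubeIdx (d k : ℕ) := Fin d → Fin (2^k)

/-- The dyadic cube of side-cardinality `2^(n-k)` indexed by `j ∈ {0,…,2^k-1}^d`. -/
def cube (n d k : ℕ) (j : CubeIdx d k) : Finset (GridPt n d) :=
  Finset.univ.filter (fun x => ∀ i, (x i : ℕ) / 2^(n-k) = (j i : ℕ))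

/-- `p = 2^{-4d}`. -/
def pp (d : ℕ) : ℝ := ((2:ℝ)^(4*d))⁻¹

/-- The law of each `X_Q`: takes values `±1` with probability `p/2` each
and `0` with probability `1-p`. -/
def stepMeasure (d : ℕ) : Measure ℝ :=
  (Real.toNNReal (pp d / 2)) • Measure.dirac (1:ℝ)
  + (Real.toNNReal (pp d / 2)) • Measure.dirac (-1:ℝ)
  + (Real.toNNReal (1 - pp d)) • Measure.dirac (0:ℝ)

instance (d : ℕ) : IsFiniteMeasure (stepMeasure d) := by
  unfold stepMeasure; infer_instance

/-- The joint law of the i.i.d. family `{X_Q}_{Q ∈ D_k}`; a sample point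
`ω : CubeIdx d k → ℝ` records the values `X_Q = ω Q`. -/
def prodMeasure (d k : ℕ) : Measure (CubeIdx d k → ℝ) :=
  Measure.pi fun _ => stepMeasure d

/-- `μ_k(A) = ∑_{Q ∈ D_k} p⁻¹ 2^k X_Q Vol(A ∩ Q)`, as a function of the sample point `ω`. -/
def muMeas (n d k : ℕ) (A : Finset (GridPt n d)) (ω : CubeIdx d k → ℝ) : ℝ :=
  ∑ j : CubeIdx d k, (pp d)⁻¹ * 2^k * ω j * Vol n d (A ∩ cube n d k j)

section ProductMeasure

open ProbabilityTheory

lemma integral_abs_le_sqrt_integral_sq {Ω : Type*} [MeasurableSpace Ω] {P : Measure Ω}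
    [IsProbabilityMeasure P] {X : Ω → ℝ} (hX : MemLp X 2 P) :
    ∫ ω, |X ω| ∂P ≤ √(∫ ω, X ω ^ 2 ∂P) := by
  refine Real.le_sqrt_of_sq_le ?_
  have h_var : 0 ≤ Var[|X|; P] := variance_nonneg _ _
  rw [variance_eq_sub hX.abs] at h_var
  simpa only [Pi.pow_apply, Pi.abs_apply, sq_abs, sub_nonneg] using h_var

variable {ι : Type*} [Fintype ι] {Ω : ι → Type*} [∀ i, MeasurableSpace (Ω i)]
  {ν : ∀ i, Measure (Ω i)} [∀ i, IsProbabilityMeasure (ν i)] {X : ∀ i, Ω i → ℝ}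

lemma integral_abs_sum_pi_le (hX : ∀ i, Integrable (X i) (ν i)) :
    ∫ ω, |∑ i, X i (ω i)| ∂(Measure.pi ν) ≤ ∑ i, ∫ x, |X i x| ∂(ν i) := by
  have h_int (i : ι) : Integrable (fun ω ↦ X i (ω i)) (Measure.pi ν) := integrable_comp_eval (hX i)
  calc ∫ ω, |∑ i, X i (ω i)| ∂(Measure.pi ν)
      ≤ ∫ ω, ∑ i, |X i (ω i)| ∂(Measure.pi ν) :=
        integral_mono (integrable_finsetSum _ fun i _ ↦ h_int i).abs
          (integrable_finsetSum _ fun i _ ↦ (h_int i).abs) fun ω ↦ abs_sum_le_sum_abs _ _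
    _ = ∑ i, ∫ ω, |X i (ω i)| ∂(Measure.pi ν) :=
        integral_finsetSum _ fun i _ ↦ (h_int i).abs
    _ = ∑ i, ∫ x, |X i x| ∂(ν i) :=
        sum_congr rfl fun i _ ↦ integral_comp_eval (hX i).abs.aestronglyMeasurable

lemma memLp_sum_pi {q : ENNReal} (hX : ∀ i, MemLp (X i) q (ν i)) :
    MemLp (fun ω ↦ ∑ i, X i (ω i)) q (Measure.pi ν) :=
  memLp_finsetSum _ fun i _ ↦ (hX i).comp_measurePreserving (measurePreserving_eval ν i)

lemma integral_sum_pi (hX : ∀ i, Integrable (X i) (ν i)) :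
    ∫ ω, ∑ i, X i (ω i) ∂(Measure.pi ν) = ∑ i, ∫ x, X i x ∂(ν i) := by
  rw [integral_finsetSum _ fun i _ ↦ integrable_comp_eval (hX i)]
  exact sum_congr rfl fun i _ ↦ integral_comp_eval (hX i).aestronglyMeasurable

lemma integral_sq_sum_pi (hX : ∀ i, MemLp (X i) 2 (ν i)) (h_mean : ∀ i, ∫ x, X i x ∂(ν i) = 0) :
    ∫ ω, (∑ i, X i (ω i)) ^ 2 ∂(Measure.pi ν) = ∑ i, ∫ x, X i x ^ 2 ∂(ν i) := by
  have h_mean_sum : ∫ ω, ∑ i, X i (ω i) ∂(Measure.pi ν) = 0 := by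
    rw [integral_sum_pi fun i ↦ (hX i).integrable one_le_two, sum_eq_zero fun i _ ↦ h_mean i]
  calc ∫ ω, (∑ i, X i (ω i)) ^ 2 ∂(Measure.pi ν)
      = Var[∑ i, fun ω ↦ X i (ω i); Measure.pi ν] := by
        rw [← variance_of_integral_eq_zero (memLp_sum_pi hX).aemeasurable h_mean_sum]
        congr 1
        ext ω
        simp only [Finset.sum_apply]
    _ = ∑ i, Var[X i; ν i] := variance_sum_pi hX
    _ = ∑ i, ∫ x, X i x ^ 2 ∂(ν i) :=
        sum_congr rfl fun i _ ↦ variance_of_integral_eq_zero (hX i).aemeasurable (h_mean i)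

lemma integral_abs_sum_pi_le_sqrt (hX : ∀ i, MemLp (X i) 2 (ν i))
    (h_mean : ∀ i, ∫ x, X i x ∂(ν i) = 0) :
    ∫ ω, |∑ i, X i (ω i)| ∂(Measure.pi ν) ≤ √(∑ i, ∫ x, X i x ^ 2 ∂(ν i)) :=
  (integral_abs_le_sqrt_integral_sq (memLp_sum_pi hX)).trans_eq
    (congrArg Real.sqrt (integral_sq_sum_pi hX h_mean))

end ProductMeasure

lemma pp_pos (d : ℕ) : 0 < pp d := by unfold pp; positivity

lemma pp_le_one (d : ℕ) : pp d ≤ 1 := inv_le_one_of_one_le₀ (one_le_pow₀ one_le_two)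

lemma integrable_smul_dirac {α E : Type*} [MeasurableSpace α] [MeasurableSingletonClass α]
    [NormedAddCommGroup E] (c : NNReal) (a : α) (f : α → E) :
    Integrable f (c • Measure.dirac a) :=
  (integrable_dirac enorm_lt_top).smul_measure_nnreal

lemma integrable_stepMeasure (d : ℕ) (f : ℝ → ℝ) : Integrable f (stepMeasure d) :=
  ((integrable_smul_dirac _ _ f).add_measure (integrable_smul_dirac _ _ f)).add_measure
    (integrable_smul_dirac _ _ f)

lemma memLp_two_stepMeasure (d : ℕ) (f : ℝ → ℝ) : MemLp f 2 (stepMeasure d) :=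
  (memLp_two_iff_integrable_sq (integrable_stepMeasure d f).aestronglyMeasurable).2
    (integrable_stepMeasure d _)

lemma integral_stepMeasure (d : ℕ) (f : ℝ → ℝ) :
    ∫ x, f x ∂(stepMeasure d) = pp d / 2 * f 1 + pp d / 2 * f (-1) + (1 - pp d) * f 0 := by
  have h_int (c : NNReal) (a : ℝ) := integrable_smul_dirac c a f
  have h_half : 0 ≤ pp d / 2 := (half_pos (pp_pos d)).le
  have h_compl : 0 ≤ 1 - pp d := sub_nonneg.2 (pp_le_one d)
  rw [stepMeasure, integral_add_measure ((h_int _ _).add_measure (h_int _ _)) (h_int _ _),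
    integral_add_measure (h_int _ _) (h_int _ _)]
  simp only [integral_smul_nnreal_measure, integral_dirac, NNReal.smul_def, smul_eq_mul,
    Real.coe_toNNReal _ h_half, Real.coe_toNNReal _ h_compl]

instance isProbabilityMeasure_stepMeasure (d : ℕ) : IsProbabilityMeasure (stepMeasure d) := by
  have h_mass : (stepMeasure d).real Set.univ = 1 := by
    have h_one := integral_stepMeasure d fun _ ↦ 1
    simp only [integral_const, smul_eq_mul, mul_one] at h_one
    linarith
  exact ⟨(ENNReal.toReal_eq_one_iff _).1 h_mass⟩

section Volume

variable {n d k : ℕ}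

lemma vol_nonneg (A : Finset (GridPt n d)) : 0 ≤ Vol n d A := by unfold Vol; positivity

lemma vol_pos {A : Finset (GridPt n d)} (hA : A.Nonempty) : 0 < Vol n d A :=
  div_pos (Nat.cast_pos.2 hA.card_pos) (by positivity)

lemma vol_mono {A B : Finset (GridPt n d)} (h : A ⊆ B) : Vol n d A ≤ Vol n d B := by
  unfold Vol
  gcongr

lemma card_filter_val_div_eq {N m j : ℕ} (hm : 0 < m) (hj : (j + 1) * m ≤ N) :
    #{x : Fin N | (x : ℕ) / m = j} = m := by
  have h_block : ({x : Fin N | (x : ℕ) / m = j} : Finset (Fin N)).map Fin.valEmbedding =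
      Ico (j * m) ((j + 1) * m) := by
    ext a
    rw [add_one_mul] at hj ⊢
    simp only [mem_map, mem_filter_univ, Fin.valEmbedding_apply, mem_Ico, Nat.div_eq_iff hm]
    exact ⟨by rintro ⟨x, hx, rfl⟩; omega, fun ha ↦ ⟨⟨a, by omega⟩, by dsimp only; omega, rfl⟩⟩
  rw [← card_map Fin.valEmbedding, h_block, Nat.card_Ico, add_one_mul, Nat.add_sub_cancel_left]

lemma card_cube (hkn : k ≤ n) (j : CubeIdx d k) : #(cube n d k j) = (2 ^ (n - k)) ^ d := by
  have h_side (i : Fin d) : ((j i : ℕ) + 1) * 2 ^ (n - k) ≤ 2 ^ n := by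
    rw [← pow_mul_pow_sub 2 hkn]
    exact Nat.mul_le_mul_right _ (j i).isLt
  have h_pi : cube n d k j =
      Fintype.piFinset fun i ↦ {x : Fin (2 ^ n) | (x : ℕ) / 2 ^ (n - k) = j i} := by
    ext x
    simp only [cube, mem_filter_univ, Fintype.mem_piFinset]
  simp only [h_pi, Fintype.card_piFinset,
    card_filter_val_div_eq (Nat.two_pow_pos _) (h_side _), prod_const, card_univ, Fintype.card_fin]

lemma vol_cube (hkn : k ≤ n) (j : CubeIdx d k) : Vol n d (cube n d k j) = (2 ^ (k * d))⁻¹ := by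
  have h_split : (2 : ℝ) ^ (n * d) = 2 ^ (k * d) * (2 ^ (n - k)) ^ d := by
    rw [← pow_mul, ← pow_add, ← add_mul, Nat.add_sub_cancel' hkn]
  rw [Vol, card_cube hkn, h_split]
  push_cast
  field_simp

/-- The index of the unique cube of `D_k` containing a grid point. -/
def cubeIndex (hkn : k ≤ n) (x : GridPt n d) : CubeIdx d k := fun i ↦
  ⟨(x i : ℕ) / 2 ^ (n - k), Nat.div_lt_of_lt_mul <| by
    rw [mul_comm, pow_mul_pow_sub 2 hkn]; exact (x i).isLt⟩

lemma mem_cube_iff (hkn : k ≤ n) {x : GridPt n d} {j : CubeIdx d k} :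
    x ∈ cube n d k j ↔ cubeIndex hkn x = j := by
  simp only [cube, mem_filter_univ, cubeIndex, funext_iff, Fin.ext_iff]

lemma sum_vol_inter_cube (hkn : k ≤ n) (A : Finset (GridPt n d)) :
    ∑ j, Vol n d (A ∩ cube n d k j) = Vol n d A := by
  have h_fiber (j : CubeIdx d k) : A ∩ cube n d k j = {x ∈ A | cubeIndex hkn x = j} := by
    ext x
    rw [mem_inter, mem_filter, mem_cube_iff hkn]
  simp only [Vol, ← sum_div, h_fiber, ← Nat.cast_sum]
  rw [← card_eq_sum_card_fiberwise fun _ _ ↦ mem_coe.2 (mem_univ _)]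

lemma sum_sq_vol_inter_cube_le (hkn : k ≤ n) (A : Finset (GridPt n d)) :
    ∑ j, Vol n d (A ∩ cube n d k j) ^ 2 ≤ (2 ^ (k * d))⁻¹ * Vol n d A := by
  rw [← sum_vol_inter_cube hkn A, mul_sum]
  refine sum_le_sum fun j _ ↦ ?_
  rw [sq, ← vol_cube hkn j]
  exact mul_le_mul_of_nonneg_right (vol_mono inter_subset_right) (vol_nonneg _)

end Volume

section ExpectedMass

variable {n d k : ℕ}

/-- The contribution `p⁻¹ 2^k x Vol(A ∩ Q)` of the cube `Q` with index `j` to `μ_k(A)` when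
`X_Q = x`. -/
def cubeTerm (n d k : ℕ) (A : Finset (GridPt n d)) (j : CubeIdx d k) (x : ℝ) : ℝ :=
  (pp d)⁻¹ * 2 ^ k * x * Vol n d (A ∩ cube n d k j)

lemma integral_abs_cubeTerm (A : Finset (GridPt n d)) (j : CubeIdx d k) :
    ∫ x, |cubeTerm n d k A j x| ∂(stepMeasure d) = 2 ^ k * Vol n d (A ∩ cube n d k j) := by
  have hp := pp_pos d
  simp only [cubeTerm, abs_mul, abs_inv, abs_pow, Nat.abs_ofNat, abs_of_pos hp,
    abs_of_nonneg (vol_nonneg _)]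
  rw [integral_stepMeasure]
  simp only [abs_neg, abs_one, abs_zero]
  field_simp
  ring

lemma integral_cubeTerm (A : Finset (GridPt n d)) (j : CubeIdx d k) :
    ∫ x, cubeTerm n d k A j x ∂(stepMeasure d) = 0 := by
  rw [integral_stepMeasure]
  unfold cubeTerm
  ring

lemma integral_sq_cubeTerm (A : Finset (GridPt n d)) (j : CubeIdx d k) :
    ∫ x, cubeTerm n d k A j x ^ 2 ∂(stepMeasure d) =
      (pp d)⁻¹ * (2 ^ k) ^ 2 * Vol n d (A ∩ cube n d k j) ^ 2 := by
  have hp := pp_pos d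
  rw [integral_stepMeasure]
  unfold cubeTerm
  field_simp
  ring

lemma integral_abs_muMeas_le (hkn : k ≤ n) (A : Finset (GridPt n d)) :
    ∫ ω, |muMeas n d k A ω| ∂(prodMeasure d k) ≤ 2 ^ k * Vol n d A :=
  calc ∫ ω, |muMeas n d k A ω| ∂(prodMeasure d k)
      ≤ ∑ j, ∫ x, |cubeTerm n d k A j x| ∂(stepMeasure d) :=
        integral_abs_sum_pi_le (X := cubeTerm n d k A) fun _ ↦ integrable_stepMeasure d _
    _ = 2 ^ k * Vol n d A := by
        simp only [integral_abs_cubeTerm, ← mul_sum, sum_vol_inter_cube hkn]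

lemma integral_abs_muMeas_le_sqrt (hkn : k ≤ n) (A : Finset (GridPt n d)) :
    ∫ ω, |muMeas n d k A ω| ∂(prodMeasure d k) ≤
      √((pp d)⁻¹ * (2 ^ k) ^ 2 * ((2 ^ (k * d))⁻¹ * Vol n d A)) := by
  have hp := pp_pos d
  calc ∫ ω, |muMeas n d k A ω| ∂(prodMeasure d k)
      ≤ √(∑ j, ∫ x, cubeTerm n d k A j x ^ 2 ∂(stepMeasure d)) :=
        integral_abs_sum_pi_le_sqrt (X := cubeTerm n d k A)
          (fun _ ↦ memLp_two_stepMeasure d _) (integral_cubeTerm A)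
    _ = √((pp d)⁻¹ * (2 ^ k) ^ 2 * ∑ j, Vol n d (A ∩ cube n d k j) ^ 2) := by
        simp only [integral_sq_cubeTerm, mul_sum]
    _ ≤ √((pp d)⁻¹ * (2 ^ k) ^ 2 * ((2 ^ (k * d))⁻¹ * Vol n d A)) := by
        gcongr
        exact sum_sq_vol_inter_cube_le hkn A

end ExpectedMass

lemma mul_rpow_neg_half_eq_sqrt {a b : ℝ} (ha : 0 ≤ a) (hb : 0 ≤ b) :
    a * b ^ (-(1 / 2) : ℝ) = √(a ^ 2 / b) := by
  rw [Real.rpow_neg hb, ← Real.sqrt_eq_rpow, Real.sqrt_div (sq_nonneg a), Real.sqrt_sq ha,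
    div_eq_mul_inv]

theorem expected_mu_min_bound_general (n d k : ℕ) (hkn : k ≤ n)
    (A : Finset (GridPt n d)) (hA : A.Nonempty) :
    ∫ ω, |muMeas n d k A ω| ∂(prodMeasure d k)
      ≤ 2^k * Vol n d A * min 1 ((pp d * 2^(k*d) * Vol n d A) ^ (-(1/2) : ℝ)) := by
  have hp := pp_pos d
  have hV := vol_pos hA
  rw [mul_min_of_nonneg _ _ (by positivity), mul_one,
    mul_rpow_neg_half_eq_sqrt (by positivity) (by positivity)]
  refine le_min (integral_abs_muMeas_le hkn A)
    ((integral_abs_muMeas_le_sqrt hkn A).trans_eq (congrArg Real.sqrt ?_))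
  field_simp

/-- `E[|μ_k(A)|] ≤ 2^k·Vol(A)·min{1, (p·2^{kd}·Vol(A))^{-1/2}}` for nonempty `A`. -/
theorem expected_mu_min_bound (n d k : ℕ) (hd : 3 ≤ d) (hk : 1 ≤ k) (hkn : k ≤ n)
    (A : Finset (GridPt n d)) (hA : A.Nonempty) :
    ∫ ω, |muMeas n d k A ω| ∂(prodMeasure d k)
      ≤ 2^k * Vol n d A * min 1 ((pp d * 2^(k*d) * Vol n d A) ^ (-(1/2) : ℝ)) :=
  expected_mu_min_bound_general n d k hkn A hA
end
end
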